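/- Let Ω be an open bounded convex set in ℝⁿ with its Hilbert metric. If τ: Ω → Ω is an isometry, then τ² = τ∘τ is (the restriction of) a projective transformation. -/

import Mathlib

/-!
The argument takes place in the open cone `C` over `Ω` in `ℝⁿ⁺¹`. With the gauge
`M(x, y) = inf {m | x < m y}` of the order defined by `C`, the Hilbert metric is the logarithm of
`E(x, y) = M(x, y) M(y, x)` (`hilbertDist_eq`), and an isometry of `Ω` lifts to a bijection `T` of
`C`, homogeneous of degree one, that preserves `E` (`isIso_lift`). The claim becomes that `T ∘ T`
agrees with a linear map up to positive scalars (`isProj_sq`).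

A ray `x + s z` with `z` an extreme direction is a unique geodesic, and `T` carries it to a ray
`T x + s a` up to scalars (`exists_ray`). The direction `z` is called focusing if the ends `a` for
different `x` are proportional. For two rays in the same direction, the asymptotic distances of the
points with parameters `s` and `k s` are compared before and after applying `T` (`ray_pair`). It
follows that the image ends of the rays in a non-focusing direction are smooth boundary points
(`smooth_of_not_foc`), and that a smooth extreme direction is focusing (`foc_of_smooth`).

If `z₁` is focusing, `T` maps each sector `x + s z₂ + t z₁` onto a sector linearly, up to scalars
(`plane_aux`), so focusing passes from one extreme direction to all exposed directions
(`foc_propagate`, `Foc.isExp`). Exposed directions span the space, and along a basis of them `T` acts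
by translations up to scalars; hence a single focusing extreme direction makes `T` projective
(`proj_of_foc`).

Suppose finally that none of `T`, `T⁻¹` and `T ∘ T` has a focusing extreme direction. The image under
`T ∘ T` of a ray in an extreme direction is then a ray with a smooth end `a`, and `T⁻¹` carries it to
the image ray under `T`, whose end is smooth as well. The supporting hyperplane at `a` contains an
extreme direction `e`, and `T⁻¹` carries the rays in direction `e` to rays with smooth ends. An
estimate of distances near `a + e` shows that `e` is then smooth (`smooth_of_rays`), hence focusing
for `T⁻¹`, a contradiction.
-/

open Set
open scoped LinearAlgebra.Projectivization
open scoped Classical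

noncomputable section

abbrev Euc (n : ℕ) := EuclideanSpace ℝ (Fin n)

/-- `α` and `β` are the two points where the straight line through `x` and `y`
meets the boundary of `Ω`, labeled so that `|α−x| < |α−y|` and `|β−y| < |β−x|`. -/
def IsHilbertPair {n : ℕ} (Ω : Set (Euc n)) (x y α β : Euc n) : Prop :=
  α ∈ frontier Ω ∧ β ∈ frontier Ω ∧
    Collinear ℝ ({α, x, y} : Set (Euc n)) ∧ Collinear ℝ ({β, x, y} : Set (Euc n)) ∧
    dist α x < dist α y ∧ dist β y < dist β x

/-- The Hilbert metric of `Ω`: `d_Ω(x,y) = ln((|α−y|/|α−x|)·(|β−x|/|β−y|))` for `x ≠ y`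
(where `α, β` are as in `IsHilbertPair`; for `x ≠ y` in a convex domain `Ω` such a pair
exists and is unique), and `d_Ω(x,x) = 0` (no such pair exists when `x = y`). -/
def hilbertDist {n : ℕ} (Ω : Set (Euc n)) (x y : Euc n) : ℝ :=
  if h : ∃ p : Euc n × Euc n, IsHilbertPair Ω x y p.1 p.2 then
    Real.log ((dist h.choose.1 y / dist h.choose.1 x) * (dist h.choose.2 x / dist h.choose.2 y))
  else 0

/-- An isometry of Hilbert geometries: a surjective distance preserving map. -/
def IsHilbertIsometry {n : ℕ} (Ω Ω' : Set (Euc n)) (τ : Euc n → Euc n) : Prop :=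
  Set.MapsTo τ Ω Ω' ∧ Set.SurjOn τ Ω Ω' ∧
    ∀ x ∈ Ω, ∀ y ∈ Ω, hilbertDist Ω' (τ x) (τ y) = hilbertDist Ω x y

/-- The standard affine chart `ℝⁿ → ℝPⁿ`, `x ↦ [x : 1]`. -/
def chart {n : ℕ} (x : Euc n) : Projectivization ℝ (Fin (n + 1) → ℝ) :=
  Projectivization.mk ℝ ((Fin.snoc (fun i => x i) 1 : Fin (n + 1) → ℝ))
    (fun h => one_ne_zero (α := ℝ) (by simpa using congrFun h (Fin.last n)))

/-- The projective transformation of `ℝPⁿ` induced by an element of `GL_{n+1}(ℝ)`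
(every element of `PGL_{n+1}(ℝ)` arises this way). -/
def projMap {n : ℕ} (g : (Fin (n + 1) → ℝ) ≃ₗ[ℝ] (Fin (n + 1) → ℝ)) :
    Projectivization ℝ (Fin (n + 1) → ℝ) → Projectivization ℝ (Fin (n + 1) → ℝ) :=
  Projectivization.map (g : (Fin (n + 1) → ℝ) →ₗ[ℝ] (Fin (n + 1) → ℝ)) g.injective

/-- `τ` agrees on `Ω` with (the restriction of) a projective transformation of `ℝPⁿ`. -/
def IsProjectiveOn {n : ℕ} (Ω : Set (Euc n)) (τ : Euc n → Euc n) : Prop :=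
  ∃ g : (Fin (n + 1) → ℝ) ≃ₗ[ℝ] (Fin (n + 1) → ℝ),
    ∀ x ∈ Ω, chart (τ x) = projMap g (chart x)

/-- A ray in `Ω`: the intersection with `Ω` of a Euclidean ray starting at a point of `Ω`. -/
def IsRayIn {n : ℕ} (Ω r : Set (Euc n)) : Prop :=
  ∃ p ∈ Ω, ∃ d : Euc n, d ≠ 0 ∧ r = {x | ∃ t : ℝ, 0 ≤ t ∧ x = p + t • d} ∩ Ω

/-- A line in `Ω`: the nonempty intersection of a straight line with `Ω`. -/
def IsLineIn {n : ℕ} (Ω L : Set (Euc n)) : Prop :=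
  L.Nonempty ∧ ∃ p d : Euc n, d ≠ 0 ∧ L = {x | ∃ t : ℝ, x = p + t • d} ∩ Ω

/-- `a` is an accumulation point of the set `s ⊆ Ω` on the boundary of `Ω`.
For a ray `r` in a convex domain `Ω` there is exactly one such point, denoted `a(r)`. -/
def IsBdryLimit {n : ℕ} (Ω s : Set (Euc n)) (a : Euc n) : Prop :=
  a ∈ frontier Ω ∧ a ∈ closure s

/-- `e` is a focusing point of the isometry `τ : Ω → Ω'`: an extreme point of the closure
of `Ω` such that for any two rays `r₁, r₂` in `Ω` with `a(r₁) = a(r₂) = e` one has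
`a(τ(r₁)) = a(τ(r₂))`. -/
def IsFocusingPoint {n : ℕ} (Ω Ω' : Set (Euc n)) (τ : Euc n → Euc n) (e : Euc n) : Prop :=
  e ∈ Set.extremePoints ℝ (closure Ω) ∧
    ∀ r₁ r₂ : Set (Euc n), IsRayIn Ω r₁ → IsRayIn Ω r₂ →
      IsBdryLimit Ω r₁ e → IsBdryLimit Ω r₂ e →
      ∀ a₁ a₂ : Euc n, IsBdryLimit Ω' (τ '' r₁) a₁ → IsBdryLimit Ω' (τ '' r₂) a₂ → a₁ = a₂

/-- An extreme line in `Ω`: a line in `Ω` whose closure meets `∂Ω` in extreme points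
of the closure of `Ω`. -/
def IsExtremeLine {n : ℕ} (Ω L : Set (Euc n)) : Prop :=
  IsLineIn Ω L ∧ ∀ x ∈ closure L ∩ frontier Ω, x ∈ Set.extremePoints ℝ (closure Ω)

/-- `s` is rigid in `Ω`: for any two points `a, b` of `s` the segment `[a,b]` is the
unique geodesic from `a` to `b` in `(Ω, d_Ω)`, i.e. every point `z` with
`d(a,z) + d(z,b) = d(a,b)` lies on the segment `[a,b]`. -/
def IsRigidSet {n : ℕ} (Ω s : Set (Euc n)) : Prop :=
  ∀ a ∈ s, ∀ b ∈ s, ∀ z ∈ Ω,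
    hilbertDist Ω a z + hilbertDist Ω z b = hilbertDist Ω a b → z ∈ segment ℝ a b

/-- A face of a closed convex set `C`: a convex subset `F ⊆ C` such that whenever an open
segment between two points of `C` meets `F`, the whole closed segment lies in `F`. -/
def IsFace {n : ℕ} (C F : Set (Euc n)) : Prop :=
  Convex ℝ F ∧ IsExtreme ℝ C F

/-- A face of `C` which is neither empty nor all of `C`. -/
def IsProperFace {n : ℕ} (C F : Set (Euc n)) : Prop :=
  IsFace C F ∧ F.Nonempty ∧ F ≠ C

/-- `Ω` is a cone with vertex `v` and base `B`: `B` is an `(n−1)`-dimensional convex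
domain lying in a hyperplane not containing `v`, and `Ω` is the union of the open
segments from `v` to the points of `B`. -/
def IsConeWith {n : ℕ} (Ω : Set (Euc n)) (v : Euc n) (B : Set (Euc n)) : Prop :=
  ∃ (f : Euc n →ₗ[ℝ] ℝ) (c : ℝ), f ≠ 0 ∧ (∀ b ∈ B, f b = c) ∧ f v ≠ c ∧
    B.Nonempty ∧ Convex ℝ B ∧ Bornology.IsBounded B ∧
    B = intrinsicInterior ℝ B ∧
    (affineSpan ℝ B : Set (Euc n)) = {x | f x = c} ∧
    Ω = ⋃ b ∈ B, openSegment ℝ v b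

/-- `Ω` is a cone. -/
def IsCone {n : ℕ} (Ω : Set (Euc n)) : Prop :=
  ∃ v B, IsConeWith Ω v B

section Body

variable {V : Type*} [NormedAddCommGroup V] [InnerProductSpace ℝ V]

/-! ### Open convex cones and their gauges -/

/-- An open convex cone (possibly containing lines). -/
structure IsOCone (U : Set V) : Prop where
  isOpen : IsOpen U
  add : ∀ {x y}, x ∈ U → y ∈ U → x + y ∈ U
  smul : ∀ {c : ℝ} {x}, 0 < c → x ∈ U → c • x ∈ U

/-- A nonempty open convex cone on which the functional `ℓ` is positive and dominates the norm,
so that the closed cone is pointed and its slice `ℓ = 1` is compact. -/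
structure IsPCone (C : Set V) (ℓ : V →L[ℝ] ℝ) : Prop extends IsOCone C where
  nonempty : C.Nonempty
  pos : ∀ {x}, x ∈ C → 0 < ℓ x
  bdd : ∃ R : ℝ, ∀ x ∈ C, ‖x‖ ≤ R * ℓ x

/-- The gauge `M(x, y) = inf {m > 0 | x < m y}` of the order defined by the open cone `U`. -/
def gau (U : Set V) (x y : V) : ℝ := sInf {m : ℝ | 0 < m ∧ m • y - x ∈ U}

theorem gau_nonneg (U : Set V) (x y : V) : 0 ≤ gau U x y :=
  Real.sInf_nonneg fun _ hm => hm.1.le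

theorem IsOCone.exists_mem {U : Set V} (hU : IsOCone U) {y : V} (hy : y ∈ U) (x : V) :
    ∃ m : ℝ, 0 < m ∧ m • y - x ∈ U := by
  have h1 : Filter.Tendsto (fun e : ℝ => y - e • x) (nhdsWithin 0 (Ioi 0)) (nhds y) := by
    have : Continuous (fun e : ℝ => y - e • x) := by fun_prop
    have h := this.tendsto 0
    simp only [zero_smul, sub_zero] at h
    exact h.mono_left nhdsWithin_le_nhds
  have h2 := h1.eventually (hU.isOpen.mem_nhds hy)
  obtain ⟨e, he, he0⟩ := (h2.and self_mem_nhdsWithin).exists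
  have he0 : (0 : ℝ) < e := he0
  refine ⟨e⁻¹, by positivity, ?_⟩
  have := hU.smul (inv_pos.2 he0) he
  rwa [smul_sub, smul_smul, inv_mul_cancel₀ he0.ne', one_smul] at this

/-- The infimum defining the gauge is not attained, because the cone is open. -/
theorem IsOCone.gau_lt_iff {U : Set V} (hU : IsOCone U) {y : V} (hy : y ∈ U) {x : V} {m : ℝ} :
    gau U x y < m ↔ 0 < m ∧ m • y - x ∈ U := by
  have hbb : BddBelow {m : ℝ | 0 < m ∧ m • y - x ∈ U} := ⟨0, fun m hm => hm.1.le⟩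
  constructor
  · intro h
    obtain ⟨m', hm', hlt⟩ := exists_lt_of_csInf_lt (hU.exists_mem hy x) h
    refine ⟨hm'.1.trans hlt, ?_⟩
    have := hU.add hm'.2 (hU.smul (sub_pos.2 hlt) hy)
    convert this using 1
    module
  · rintro ⟨h0, hm⟩
    have h1 : Filter.Tendsto (fun e : ℝ => e • y - x) (nhdsWithin m (Iio m)) (nhds (m • y - x)) := by
      have : Continuous (fun e : ℝ => e • y - x) := by fun_prop
      exact (this.tendsto m).mono_left nhdsWithin_le_nhds
    have h2 := h1.eventually (hU.isOpen.mem_nhds hm)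
    have h3 : ∀ᶠ e in nhdsWithin m (Iio m), (0 : ℝ) < e :=
      nhdsWithin_le_nhds (lt_mem_nhds h0)
    obtain ⟨e, ⟨he, he1⟩, he0⟩ := ((h2.and h3).and self_mem_nhdsWithin).exists
    exact lt_of_le_of_lt (csInf_le hbb ⟨he1, he⟩) he0


variable {C : Set V} {ℓ : V →L[ℝ] ℝ}

namespace IsPCone

theorem cl_add (hC : IsPCone C ℓ) {x y : V} (hx : x ∈ closure C) (hy : y ∈ closure C) :
    x + y ∈ closure C :=
  map_mem_closure₂ continuous_add hx hy fun _ ha _ hb => hC.add ha hb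

theorem cl_add_mem (hC : IsPCone C ℓ) {x y : V} (hx : x ∈ closure C) (hy : y ∈ C) :
    x + y ∈ C := by
  have hopen : IsOpen {w : V | y - (w - x) ∈ C} :=
    hC.isOpen.preimage (by fun_prop)
  obtain ⟨w, hw, hwC⟩ := mem_closure_iff.1 hx _ hopen (by simpa using hy)
  have := hC.add hwC hw
  convert this using 1
  abel

theorem zero_cl (hC : IsPCone C ℓ) : (0 : V) ∈ closure C := by
  obtain ⟨x, hx⟩ := hC.nonempty
  have h1 : Filter.Tendsto (fun e : ℝ => e • x) (nhdsWithin 0 (Ioi 0)) (nhds 0) := by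
    have : Continuous (fun e : ℝ => e • x) := by fun_prop
    have h := this.tendsto 0
    simp only [zero_smul] at h
    exact h.mono_left nhdsWithin_le_nhds
  refine mem_closure_of_tendsto h1 ?_
  filter_upwards [self_mem_nhdsWithin] with e he using hC.smul he hx

theorem cl_smul (hC : IsPCone C ℓ) {c : ℝ} {x : V} (hc : 0 ≤ c) (hx : x ∈ closure C) :
    c • x ∈ closure C := by
  rcases hc.eq_or_lt with rfl | hc
  · simpa using hC.zero_cl
  · exact map_mem_closure (continuous_const_smul c) hx fun _ ha => hC.smul hc ha

theorem cl_bdd (hC : IsPCone C ℓ) : ∃ R : ℝ, ∀ x ∈ closure C, ‖x‖ ≤ R * ℓ x := by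
  obtain ⟨R, hR⟩ := hC.bdd
  refine ⟨R, fun x hx => ?_⟩
  exact closure_minimal (fun y hy => hR y hy)
    (isClosed_le continuous_norm (continuous_const.mul ℓ.continuous)) hx

theorem cl_nonneg (_hC : IsPCone C ℓ) {f : V →L[ℝ] ℝ} (hf : ∀ x ∈ C, 0 < f x) {x : V}
    (hx : x ∈ closure C) : 0 ≤ f x :=
  closure_minimal (fun y hy => (hf y hy).le) (isClosed_le continuous_const f.continuous) hx

theorem l_nonneg (hC : IsPCone C ℓ) {x : V} (hx : x ∈ closure C) : 0 ≤ ℓ x :=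
  hC.cl_nonneg (fun _ h => hC.pos h) hx

theorem l_pos (hC : IsPCone C ℓ) {x : V} (hx : x ∈ closure C) (h0 : x ≠ 0) : 0 < ℓ x := by
  obtain ⟨R, hR⟩ := hC.cl_bdd
  have h1 := hR x hx
  have h2 : 0 < ‖x‖ := norm_pos_iff.2 h0
  rcases (hC.l_nonneg hx).eq_or_lt with h | h
  · rw [← h] at h1; simp at h1; exact absurd h1 h0
  · exact h

theorem ne_zero (hC : IsPCone C ℓ) {x : V} (hx : x ∈ C) : x ≠ 0 := by
  rintro rfl
  have := hC.pos hx
  simp at this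

theorem gau_le_iff (hC : IsPCone C ℓ) {x y : V} (hx : x ∈ closure C) (hy : y ∈ C) {m : ℝ} :
    gau C x y ≤ m ↔ m • y - x ∈ closure C := by
  constructor
  · intro h
    have h1 : Filter.Tendsto (fun e : ℝ => e • y - x) (nhdsWithin m (Ioi m))
        (nhds (m • y - x)) := by
      have : Continuous (fun e : ℝ => e • y - x) := by fun_prop
      exact (this.tendsto m).mono_left nhdsWithin_le_nhds
    refine mem_closure_of_tendsto h1 ?_
    filter_upwards [self_mem_nhdsWithin] with e he
    exact ((hC.gau_lt_iff hy).1 (lt_of_le_of_lt h he)).2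
  · intro h
    have hm : 0 ≤ m := by
      have h1 := hC.l_nonneg h
      have h2 := hC.l_nonneg hx
      have h3 := hC.pos hy
      simp only [map_sub, map_smul, smul_eq_mul] at h1
      by_contra hm
      nlinarith
    refine le_of_forall_gt fun m' hm' => ?_
    refine (hC.gau_lt_iff hy).2 ⟨lt_of_le_of_lt hm hm', ?_⟩
    have := hC.cl_add_mem h (hC.smul (sub_pos.2 hm') hy)
    convert this using 1
    module

theorem gau_mem (hC : IsPCone C ℓ) {x y : V} (hx : x ∈ closure C) (hy : y ∈ C) :
    gau C x y • y - x ∈ closure C := (hC.gau_le_iff hx hy).1 le_rfl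

/-- A positive functional is monotone for the order, hence bounds the gauge from below. -/
theorem map_le (hC : IsPCone C ℓ) {f : V →L[ℝ] ℝ} (hf : ∀ x ∈ C, 0 < f x) {x y : V}
    (hx : x ∈ closure C) (hy : y ∈ C) : f x ≤ gau C x y * f y := by
  have := hC.cl_nonneg hf (hC.gau_mem hx hy)
  simpa using this

theorem gau_pos (hC : IsPCone C ℓ) {x y : V} (hx : x ∈ closure C) (h0 : x ≠ 0) (hy : y ∈ C) :
    0 < gau C x y := by
  have h1 := hC.map_le (fun _ h => hC.pos h) hx hy
  have h2 := hC.l_pos hx h0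
  have h3 := hC.pos hy
  by_contra h
  nlinarith

theorem antisymm (hC : IsPCone C ℓ) {x : V} (hx : x ∈ closure C) (hy : -x ∈ closure C) :
    x = 0 := by
  by_contra h
  have h1 := hC.l_pos hx h
  have h2 := hC.l_pos hy (neg_ne_zero.2 h)
  simp at h2
  linarith

theorem gau_smul_left (hC : IsPCone C ℓ) {x y : V} (hx : x ∈ closure C) (hy : y ∈ C) {c : ℝ}
    (hc : 0 < c) : gau C (c • x) y = c * gau C x y := by
  refine eq_of_forall_ge_iff fun m => ?_
  rw [hC.gau_le_iff (hC.cl_smul hc.le hx) hy, ← le_div_iff₀' hc, hC.gau_le_iff hx hy]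
  constructor
  · intro h
    have := hC.cl_smul (inv_pos.2 hc).le h
    convert this using 1
    match_scalars <;> field_simp
  · intro h
    have := hC.cl_smul hc.le h
    convert this using 1
    match_scalars <;> field_simp

theorem gau_smul_right (hC : IsPCone C ℓ) {x y : V} (hx : x ∈ closure C) (hy : y ∈ C) {c : ℝ}
    (hc : 0 < c) : gau C x (c • y) = gau C x y / c := by
  refine eq_of_forall_ge_iff fun m => ?_
  rw [hC.gau_le_iff hx (hC.smul hc hy), div_le_iff₀ hc, hC.gau_le_iff hx hy, smul_smul]

/-- The triangle inequality for the logarithm of the gauge. -/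
theorem gau_mul (hC : IsPCone C ℓ) {x y z : V} (hx : x ∈ closure C) (hy : y ∈ C) (hz : z ∈ C) :
    gau C x z ≤ gau C x y * gau C y z := by
  rw [hC.gau_le_iff hx hz]
  have h1 := hC.gau_mem hx hy
  have h2 := hC.cl_smul (gau_nonneg C x y) (hC.gau_mem (subset_closure hy) hz)
  have := hC.cl_add h1 h2
  convert this using 1
  module

/-- Moving towards a boundary ray `a` does not change `M(y, ·)`. -/
theorem gau_self_add (hC : IsPCone C ℓ) {y a : V} (hy : y ∈ C) (ha : a ∈ closure C)
    (ha' : a ∉ C) : gau C y (y + a) = 1 := by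
  have hya : y + a ∈ C := by rw [add_comm]; exact hC.cl_add_mem ha hy
  have hyc := subset_closure hy
  refine le_antisymm ((hC.gau_le_iff hyc hya).2 (by simpa using ha)) ?_
  by_contra h
  push Not at h
  set m := gau C y (y + a) with hm
  have h1 := hC.gau_mem hyc hya
  rw [← hm] at h1
  have h2 := hC.cl_add_mem h1 (hC.smul (sub_pos.2 h) hy)
  have h3 : m • (y + a) - y + (1 - m) • y = m • a := by module
  rw [h3] at h2
  have hm0 : 0 < m := hC.gau_pos hyc (hC.ne_zero hy) hya
  apply ha'
  have := hC.smul (inv_pos.2 hm0) h2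
  rwa [smul_smul, inv_mul_cancel₀ hm0.ne', one_smul] at this

theorem gau_add_self (hC : IsPCone C ℓ) {y a : V} (hy : y ∈ C) (ha : a ∈ closure C) :
    gau C (y + a) y = 1 + gau C a y := by
  have hya : y + a ∈ C := by rw [add_comm]; exact hC.cl_add_mem ha hy
  refine eq_of_forall_ge_iff fun m => ?_
  rw [hC.gau_le_iff (subset_closure hya) hy, ← le_sub_iff_add_le', hC.gau_le_iff ha hy]
  have : m • y - (y + a) = (m - 1) • y - a := by module
  rw [this]

end IsPCone

/-! ### The multiplicative Hilbert metric of a cone -/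

/-- The multiplicative Hilbert metric `E(x, y) = M(x, y) M(y, x)`; it depends only on the rays
spanned by `x` and `y`. -/
def hilE (C : Set V) (x y : V) : ℝ := gau C x y * gau C y x

theorem hilE_comm (x y : V) : hilE C x y = hilE C y x := mul_comm _ _

namespace IsPCone

theorem gau_self (hC : IsPCone C ℓ) {x : V} (hx : x ∈ C) : gau C x x = 1 := by
  have := hC.gau_add_self hx hC.zero_cl
  have h0 : gau C 0 x = 0 := by
    refine le_antisymm ?_ (gau_nonneg _ _ _)
    rw [hC.gau_le_iff hC.zero_cl hx]
    simpa using hC.zero_cl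
  simpa [h0] using this

theorem hilE_smul_left (hC : IsPCone C ℓ) {x y : V} (hx : x ∈ C) (hy : y ∈ C) {c : ℝ}
    (hc : 0 < c) : hilE C (c • x) y = hilE C x y := by
  unfold hilE
  rw [hC.gau_smul_left (subset_closure hx) hy hc, hC.gau_smul_right (subset_closure hy) hx hc]
  field_simp

theorem hilE_smul_right (hC : IsPCone C ℓ) {x y : V} (hx : x ∈ C) (hy : y ∈ C) {c : ℝ}
    (hc : 0 < c) : hilE C x (c • y) = hilE C x y := by
  rw [hilE_comm, hC.hilE_smul_left hy hx hc, hilE_comm]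

theorem one_le_hilE (hC : IsPCone C ℓ) {x y : V} (hx : x ∈ C) (hy : y ∈ C) :
    1 ≤ hilE C x y := by
  have := hC.gau_mul (subset_closure hx) hy hx
  rwa [hC.gau_self hx] at this

theorem gau_pos' (hC : IsPCone C ℓ) {x y : V} (hx : x ∈ C) (hy : y ∈ C) : 0 < gau C x y :=
  hC.gau_pos (subset_closure hx) (hC.ne_zero hx) hy

theorem hilE_mul (hC : IsPCone C ℓ) {x y z : V} (hx : x ∈ C) (hy : y ∈ C) (hz : z ∈ C) :
    hilE C x z ≤ hilE C x y * hilE C y z := by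
  have h1 := hC.gau_mul (subset_closure hx) hy hz
  have h2 := hC.gau_mul (subset_closure hz) hy hx
  unfold hilE
  calc _ ≤ (gau C x y * gau C y z) * (gau C z y * gau C y x) :=
        mul_le_mul h1 h2 (gau_nonneg _ _ _) (mul_nonneg (gau_nonneg _ _ _) (gau_nonneg _ _ _))
    _ = _ := by ring

theorem add_mem' (hC : IsPCone C ℓ) {y a : V} (hy : y ∈ C) (ha : a ∈ closure C) : y + a ∈ C := by
  rw [add_comm]; exact hC.cl_add_mem ha hy

theorem add_smul_mem (hC : IsPCone C ℓ) {y a : V} (hy : y ∈ C) (ha : a ∈ closure C) {s : ℝ}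
    (hs : 0 ≤ s) : y + s • a ∈ C := hC.add_mem' hy (hC.cl_smul hs ha)

theorem smul_notMem (hC : IsPCone C ℓ) {a : V} (ha : a ∉ C) {s : ℝ} (hs : 0 ≤ s) :
    s • a ∉ C := by
  intro h
  rcases hs.eq_or_lt with rfl | hs
  · exact hC.ne_zero h (by simp)
  · have := hC.smul (inv_pos.2 hs) h
    rw [smul_smul, inv_mul_cancel₀ hs.ne', one_smul] at this
    exact ha this

theorem gau_self_add_smul (hC : IsPCone C ℓ) {y a : V} (hy : y ∈ C) (ha : a ∈ closure C)
    (ha' : a ∉ C) {s : ℝ} (hs : 0 ≤ s) : gau C y (y + s • a) = 1 :=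
  hC.gau_self_add hy (hC.cl_smul hs ha) (hC.smul_notMem ha' hs)

theorem gau_add_smul_self (hC : IsPCone C ℓ) {y a : V} (hy : y ∈ C) (ha : a ∈ closure C)
    {s : ℝ} (hs : 0 ≤ s) : gau C (y + s • a) y = 1 + s * gau C a y := by
  rw [hC.gau_add_self hy (hC.cl_smul hs ha)]
  rcases hs.eq_or_lt with rfl | hs
  · have := hC.gau_self hy
    have h2 := hC.gau_add_self hy hC.zero_cl
    rw [add_zero, this] at h2
    simp; linarith
  · rw [hC.gau_smul_left ha hy hs]

theorem hilE_self_add_smul (hC : IsPCone C ℓ) {y a : V} (hy : y ∈ C) (ha : a ∈ closure C)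
    (ha' : a ∉ C) {s : ℝ} (hs : 0 ≤ s) : hilE C y (y + s • a) = 1 + s * gau C a y := by
  unfold hilE
  rw [hC.gau_self_add_smul hy ha ha' hs, hC.gau_add_smul_self hy ha hs, one_mul]

/-- Points at multiplicative distance `1` lie on the same ray. -/
theorem eq_smul_of_hilE (hC : IsPCone C ℓ) {x y : V} (hx : x ∈ C) (hy : y ∈ C)
    (h : hilE C x y ≤ 1) : x = gau C x y • y := by
  have h1 := hC.gau_mem (subset_closure hx) hy
  have h2 := hC.gau_mem (subset_closure hy) hx
  have h3 : 0 < gau C x y := hC.gau_pos' hx hy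
  have h4 := hC.cl_add (hC.cl_smul h3.le h2)
    (hC.cl_smul (sub_nonneg.2 h) (subset_closure hx))
  have h5 : gau C x y • (gau C y x • x - y) + (1 - hilE C x y) • x = -(gau C x y • y - x) := by
    unfold hilE; module
  rw [h5] at h4
  exact (sub_eq_zero.1 (hC.antisymm h1 h4)).symm

end IsPCone

/-- A bijection of the cone `C`, homogeneous of degree one, that preserves the Hilbert metric:
the homogeneous lift of an isometry of a slice of `C`. -/
structure IsIso (C : Set V) (T : V → V) : Prop where
  maps : ∀ {x}, x ∈ C → T x ∈ C
  smul : ∀ {c : ℝ} {x}, 0 < c → x ∈ C → T (c • x) = c • T x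
  surj : ∀ {y}, y ∈ C → ∃ x ∈ C, T x = y
  iso : ∀ {x y}, x ∈ C → y ∈ C → hilE C (T x) (T y) = hilE C x y

theorem IsIso.inj (hC : IsPCone C ℓ) {T : V → V} (hT : IsIso C T) {x y : V} (hx : x ∈ C)
    (hy : y ∈ C) (h : T x = T y) : x = y := by
  have h1 : hilE C x y ≤ 1 := by
    rw [← hT.iso hx hy, h]; unfold hilE; rw [hC.gau_self (hT.maps hy)]; norm_num
  have h2 := hC.eq_smul_of_hilE hx hy h1
  have h3 : 0 < gau C x y := hC.gau_pos' hx hy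
  set c := gau C x y
  have h4 : (c - 1) • T y = 0 := by
    rw [sub_smul, one_smul, ← hT.smul h3 hy, ← h2, h, sub_self]
  rcases smul_eq_zero.1 h4 with h5 | h5
  · rw [h2, sub_eq_zero.1 h5, one_smul]
  · exact absurd h5 (hC.ne_zero (hT.maps hy))

theorem IsIso.inj_smul (hC : IsPCone C ℓ) {T : V → V} (hT : IsIso C T) {x y : V} (hx : x ∈ C)
    (hy : y ∈ C) {c : ℝ} (hc : 0 < c) (h : T x = c • T y) : x = c • y :=
  hT.inj hC hx (hC.smul hc hy) (by rw [h, hT.smul hc hy])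

theorem IsIso.comp {T S : V → V} (hT : IsIso C T) (hS : IsIso C S) : IsIso C (T ∘ S) where
  maps h := hT.maps (hS.maps h)
  smul hc h := by simp [hS.smul hc h, hT.smul hc (hS.maps h)]
  surj h := by
    obtain ⟨x, hx, rfl⟩ := hT.surj h
    obtain ⟨y, hy, rfl⟩ := hS.surj hx
    exact ⟨y, hy, rfl⟩
  iso hx hy := by simp [hT.iso (hS.maps hx) (hS.maps hy), hS.iso hx hy]

theorem IsIso.exists_inv (hC : IsPCone C ℓ) {T : V → V} (hT : IsIso C T) :
    ∃ S, IsIso C S ∧ (∀ x ∈ C, S (T x) = x) ∧ ∀ x ∈ C, T (S x) = x := by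
  choose! S hS hTS using fun y (hy : y ∈ C) => hT.surj hy
  have hST : ∀ x ∈ C, S (T x) = x := fun x hx =>
    hT.inj hC (hS _ (hT.maps hx)) hx (hTS _ (hT.maps hx))
  refine ⟨S, ⟨fun h => hS _ h, fun hc h => ?_, fun h => ⟨_, hT.maps h, hST _ h⟩, fun hx hy => ?_⟩,
    hST, hTS⟩
  · exact hT.inj hC (hS _ (hC.smul hc h)) (hC.smul hc (hS _ h))
      (by rw [hTS _ (hC.smul hc h), hT.smul hc (hS _ h), hTS _ h])
  · rw [← hT.iso (hS _ hx) (hS _ hy), hTS _ hx, hTS _ hy]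

/-! ### Supporting functionals -/

/-- `f` is positive on the open cone `C` and vanishes at `a`. -/
def Supp (C : Set V) (a : V) (f : V →L[ℝ] ℝ) : Prop := (∀ x ∈ C, 0 < f x) ∧ f a = 0

/-- `a` spans a smooth boundary ray: its supporting functional is unique up to scaling. -/
def Smooth (C : Set V) (a : V) : Prop :=
  ∀ f g, Supp C a f → Supp C a g → ∃ c : ℝ, 0 < c ∧ g = c • f

/-- The open tangent cone of `C` at `a`. -/
def tcone (C : Set V) (a : V) : Set V := {v | ∃ s : ℝ, 0 ≤ s ∧ v + s • a ∈ C}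

/-- `a` is a nonzero boundary vector of the cone `C`. -/
structure IsBd (C : Set V) (a : V) : Prop where
  mem : a ∈ closure C
  notMem : a ∉ C
  ne : a ≠ 0

/-- `z` spans an extreme ray of the closed cone. -/
structure IsExt (C : Set V) (z : V) : Prop extends IsBd C z where
  ext : ∀ v ∈ closure C, z - v ∈ closure C → ∃ k : ℝ, 0 ≤ k ∧ v = k • z

theorem IsBd.smul (hC : IsPCone C ℓ) {a : V} (ha : IsBd C a) {c : ℝ} (hc : 0 < c) :
    IsBd C (c • a) :=
  ⟨hC.cl_smul hc.le ha.mem, hC.smul_notMem ha.notMem hc.le, smul_ne_zero hc.ne' ha.ne⟩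

/-- Separation: a vector outside an open convex cone is nonpositive for some functional that
is positive on the cone. -/
theorem IsOCone.exists_pos {U : Set V} (hU : IsOCone U) {v : V} (hv : v ∉ U) :
    ∃ f : V →L[ℝ] ℝ, (∀ x ∈ U, 0 < f x) ∧ f v ≤ 0 := by
  rcases U.eq_empty_or_nonempty with rfl | ⟨u0, hu0⟩
  · exact ⟨0, by simp, by simp⟩
  have hconv : Convex ℝ U := by
    intro x hx y hy a b ha hb hab
    rcases ha.eq_or_lt with rfl | ha
    · simp only [zero_add] at hab; subst hab; simpa using hy
    rcases hb.eq_or_lt with rfl | hb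
    · simp only [add_zero] at hab; subst hab; simpa using hx
    exact hU.add (hU.smul ha hx) (hU.smul hb hy)
  obtain ⟨f, hf⟩ := geometric_hahn_banach_open_point hconv hU.isOpen hv
  have hnn : ∀ u ∈ U, 0 ≤ -f u := by
    intro u hu
    by_contra h
    push Not at h
    have h1 := hf _ (hU.smul (c := (|f v| + 1) / f u) (div_pos (by positivity) (by linarith)) hu)
    simp only [map_smul, smul_eq_mul] at h1
    rw [div_mul_cancel₀ _ (by linarith)] at h1
    linarith [le_abs_self (f v)]
  have hpos : ∀ u ∈ U, 0 < -f u := by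
    intro u hu
    refine lt_of_le_of_ne (hnn u hu) fun h => ?_
    obtain ⟨m, hm, hmem⟩ := hU.exists_mem hu (-v)
    have h1 := hnn _ hmem
    have h2 := hf u hu
    simp only [map_sub, map_smul, map_neg, smul_eq_mul] at h1
    have h3 : f u = 0 := by linarith
    rw [h3] at h1 h2
    linarith
  refine ⟨-f, by simpa using hpos, ?_⟩
  simp only [neg_apply, Left.neg_nonpos_iff]
  by_contra h
  push Not at h
  have hu := hpos u0 hu0
  have h1 := hf _ (hU.smul (c := f v / (f u0)) (div_pos_of_neg_of_neg h (by linarith)) hu0)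
  simp only [map_smul, smul_eq_mul] at h1
  rw [div_mul_cancel₀ _ (by linarith)] at h1
  exact lt_irrefl _ h1

theorem subset_tcone (a : V) : C ⊆ tcone C a := fun x hx => ⟨0, le_rfl, by simpa using hx⟩

namespace IsPCone

theorem tcone_isOCone (hC : IsPCone C ℓ) (a : V) : IsOCone (tcone C a) where
  isOpen := by
    have : tcone C a = ⋃ s : {s : ℝ // 0 ≤ s}, {v | v + s.1 • a ∈ C} := by
      ext v; simp [tcone]
    rw [this]
    exact isOpen_iUnion fun s => hC.isOpen.preimage (by fun_prop)
  add := by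
    rintro x y ⟨s, hs, h⟩ ⟨t, ht, h'⟩
    refine ⟨s + t, by positivity, ?_⟩
    convert hC.add h h' using 1
    module
  smul := by
    rintro c x hc ⟨s, hs, h⟩
    refine ⟨c * s, by positivity, ?_⟩
    convert hC.smul hc h using 1
    module

/-- A vector outside the tangent cone at `a` is separated from it by a supporting functional. -/
theorem exists_supp_le (hC : IsPCone C ℓ) {a v : V} (ha : a ∈ closure C) (hv : v ∉ tcone C a) :
    ∃ f, Supp C a f ∧ f v ≤ 0 := by
  obtain ⟨f, hf, hfv⟩ := (hC.tcone_isOCone a).exists_pos hv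
  have hf' : ∀ x ∈ C, 0 < f x := fun x hx => hf x (subset_tcone a hx)
  refine ⟨f, ⟨hf', le_antisymm ?_ (hC.cl_nonneg hf' ha)⟩, hfv⟩
  obtain ⟨u, hu⟩ := hC.nonempty
  by_contra h
  push Not at h
  have h1 := hf (u - (f u / f a) • a)
    ⟨f u / f a, div_nonneg (hf' u hu).le h.le, by simpa using hu⟩
  simp only [map_sub, map_smul, smul_eq_mul] at h1
  rw [div_mul_cancel₀ _ h.ne'] at h1
  linarith

theorem exists_supp (hC : IsPCone C ℓ) {a : V} (ha : IsBd C a) : ∃ f, Supp C a f := by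
  obtain ⟨f, hf, -⟩ := hC.exists_supp_le (v := 0) ha.mem (by
    rintro ⟨s, hs, h⟩
    rw [zero_add] at h
    exact hC.smul_notMem ha.notMem hs h)
  exact ⟨f, hf⟩

end IsPCone

theorem Supp.nonneg (hC : IsPCone C ℓ) {a v : V} {f : V →L[ℝ] ℝ} (hf : Supp C a f)
    (hv : v ∈ closure C) : 0 ≤ f v := hC.cl_nonneg hf.1 hv

theorem Supp.pos_tcone {a v : V} {f : V →L[ℝ] ℝ} (hf : Supp C a f)
    (hv : v ∈ tcone C a) : 0 < f v := by
  obtain ⟨s, -, h⟩ := hv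
  simpa [hf.2] using hf.1 _ h

theorem Smooth.mem_tcone (hC : IsPCone C ℓ) {a v : V} (ha : a ∈ closure C) (hs : Smooth C a)
    {f : V →L[ℝ] ℝ} (hf : Supp C a f) (hv : 0 < f v) : v ∈ tcone C a := by
  by_contra h
  obtain ⟨f', hf', h'⟩ := hC.exists_supp_le ha h
  obtain ⟨c, hc, rfl⟩ := hs f f' hf hf'
  simp only [smul_apply, smul_eq_mul] at h'
  nlinarith

theorem Supp.notMem {a v : V} {f : V →L[ℝ] ℝ} (hf : Supp C a f) (hv : f v = 0) : v ∉ C :=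
  fun h => (hf.1 v h).ne' hv

theorem tcone_mono (hC : IsPCone C ℓ) {a v : V} (ha : a ∈ closure C) {s t : ℝ} (hst : s ≤ t)
    (h : v + s • a ∈ C) : v + t • a ∈ C := by
  convert hC.add_smul_mem h ha (sub_nonneg.2 hst) using 1
  module

/-! ### Images of rays that end in extreme directions -/

/-- The image under `T` of the ray `x + s z` is, projectively, the ray `T x + s a`. -/
structure IsRay (C : Set V) (T : V → V) (z x a : V) : Prop extends IsBd C a where
  ray : ∀ s : ℝ, 0 ≤ s → ∃ c : ℝ, 0 < c ∧ T (x + s • z) = c • (T x + s • a)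

/-- A point `c • (y + a)` with `a` a boundary vector determines both `c` and `a`, because
`M(y, y + a) = 1`. -/
theorem IsPCone.bd_unique (hC : IsPCone C ℓ) {y a b : V} (hy : y ∈ C) (ha : a ∈ closure C)
    (ha' : a ∉ C) (hb : b ∈ closure C) (hb' : b ∉ C) {c d : ℝ} (hc : 0 < c) (hd : 0 < d)
    (h : c • (y + a) = d • (y + b)) : c = d ∧ a = b := by
  have h1 : gau C y (c • (y + a)) = 1 / c := by
    rw [hC.gau_smul_right (subset_closure hy) (hC.add_mem' hy ha) hc, hC.gau_self_add hy ha ha']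
  have h2 : gau C y (d • (y + b)) = 1 / d := by
    rw [hC.gau_smul_right (subset_closure hy) (hC.add_mem' hy hb) hd, hC.gau_self_add hy hb hb']
  have h3 : c = d := by
    rw [h, h2] at h1
    simpa using h1.symm
  subst h3
  refine ⟨rfl, ?_⟩
  have := smul_right_injective V hc.ne' h
  simpa using this

theorem IsRay.gau_eq (hC : IsPCone C ℓ) {T : V → V} (hT : IsIso C T) {z x a : V} (hz : IsBd C z)
    (hx : x ∈ C) (h : IsRay C T z x a) : gau C a (T x) = gau C z x := by
  obtain ⟨c, hc, h1⟩ := h.ray 1 zero_le_one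
  have hx1 := hC.add_smul_mem hx hz.mem zero_le_one
  have h2 := hT.iso hx hx1
  rw [h1, hC.hilE_smul_right (hT.maps hx) (hC.add_smul_mem (hT.maps hx) h.mem zero_le_one) hc,
    hC.hilE_self_add_smul (hT.maps hx) h.mem h.notMem zero_le_one,
    hC.hilE_self_add_smul hx hz.mem hz.notMem zero_le_one] at h2
  linarith

theorem IsRay.unique (hC : IsPCone C ℓ) {T : V → V} (hT : IsIso C T) {z x a b : V}
    (hx : x ∈ C) (h : IsRay C T z x a) (h' : IsRay C T z x b) : a = b := by
  obtain ⟨c, hc, h1⟩ := h.ray 1 zero_le_one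
  obtain ⟨d, hd, h2⟩ := h'.ray 1 zero_le_one
  rw [h1, one_smul, one_smul] at h2
  exact (hC.bd_unique (hT.maps hx) h.mem h.notMem h'.mem h'.notMem hc hd h2).2

/-- On a finite stretch of the ray, the image is a straight segment. The preimage `u` of a point of
the segment from `T x` to `T (x + s z)` turns the triangle inequality between `x` and `x + s z` into
an equality; this forces `x ≤ m u ≤ x + s z` for `m = M(x, u)`, and by extremality of `z` the vector
`m u - x` is a multiple of `z`. -/
theorem exists_ray_aux (hC : IsPCone C ℓ) {T : V → V} (hT : IsIso C T) {z x : V}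
    (hz : IsExt C z) (hx : x ∈ C) {s : ℝ} (hs : 0 < s) :
    ∃ a, IsBd C a ∧ ∀ r : ℝ, 0 ≤ r → r ≤ s →
      ∃ c : ℝ, 0 < c ∧ T (x + r • z) = c • (T x + r • a) := by
  have hX : x + s • z ∈ C := hC.add_smul_mem hx hz.mem hs.le
  set X := x + s • z with hXdef
  set y := T x with hydef
  have hy : y ∈ C := hT.maps hx
  have hp : T X ∈ C := hT.maps hX
  set m := gau C y (T X) with hm
  have hm0 : 0 < m := hC.gau_pos' hy hp
  obtain ⟨a, ha⟩ : ∃ a, a = s⁻¹ • (m • T X - y) := ⟨_, rfl⟩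
  have hsa : s • a = m • T X - y := by rw [ha, smul_smul, mul_inv_cancel₀ hs.ne', one_smul]
  have haK : a ∈ closure C := by
    rw [ha]; exact hC.cl_smul (inv_pos.2 hs).le (hC.gau_mem (subset_closure hy) hp)
  have haC : a ∉ C := by
    intro h
    have h1 := hC.smul hs h
    rw [hsa] at h1
    have := (hC.gau_lt_iff hp).2 ⟨hm0, h1⟩
    exact lt_irrefl _ this
  have hEX : hilE C x X = 1 + s * gau C z x :=
    hC.hilE_self_add_smul hx hz.mem hz.notMem hs.le
  have hz0 : 0 < gau C z x := hC.gau_pos hz.mem hz.ne hx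
  have hTX : m • T X = y + s • a := by rw [hsa]; abel
  have hTX' : T X = m⁻¹ • (y + s • a) := by
    rw [← hTX, smul_smul, inv_mul_cancel₀ hm0.ne', one_smul]
  have hsaC : y + s • a ∈ C := hC.add_smul_mem hy haK hs.le
  set μ := gau C a y with hμ
  have hE2 : hilE C x X = 1 + s * μ := by
    rw [← hT.iso hx hX, ← hydef, hTX', hC.hilE_smul_right hy hsaC (inv_pos.2 hm0),
      hC.hilE_self_add_smul hy haK haC hs.le]
  have hμz : μ = gau C z x := by
    have : s * μ = s * gau C z x := by linarith
    exact mul_left_cancel₀ hs.ne' this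
  have ha0 : a ≠ 0 := by
    rintro rfl
    have : gau C 0 y ≤ 0 := by
      rw [hC.gau_le_iff hC.zero_cl hy]; simpa using hC.zero_cl
    rw [← hμ, hμz] at this
    linarith
  refine ⟨a, ⟨haK, haC, ha0⟩, fun r hr0 hrs => ?_⟩
  rcases hr0.eq_or_lt with rfl | hr0
  · exact ⟨1, one_pos, by simp [hydef]⟩
  have hv : y + r • a ∈ C := hC.add_smul_mem hy haK hr0.le
  obtain ⟨u, hu, hTu⟩ := hT.surj hv
  have hE3 : hilE C x u = 1 + r * μ := by
    rw [← hT.iso hx hu, hTu, hC.hilE_self_add_smul hy haK haC hr0.le]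
  have hμ0 : 0 < μ := hμz ▸ hz0
  have h1r : 0 < 1 + r * μ := by positivity
  have hE4 : hilE C u X ≤ (1 + s * μ) / (1 + r * μ) := by
    have e : y + s • a = (y + r • a) + (s - r) • a := by module
    rw [← hT.iso hu hX, hTu, hTX', hC.hilE_smul_right hv hsaC (inv_pos.2 hm0), e,
      hC.hilE_self_add_smul hv haK haC (sub_nonneg.2 hrs)]
    have h1 : gau C a (y + r • a) ≤ μ / (1 + r * μ) := by
      rw [hC.gau_le_iff haK hv]
      have h2 := hC.cl_smul (inv_pos.2 h1r).le (hC.gau_mem haK hy)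
      convert h2 using 1
      rw [← hμ]
      match_scalars <;> field_simp
      ring
    calc 1 + (s - r) * gau C a (y + r • a) ≤ 1 + (s - r) * (μ / (1 + r * μ)) := by
          gcongr
      _ = _ := by field_simp; ring
  have h5 : hilE C x u * hilE C u X ≤ gau C X u * gau C u x := by
    have h6 : gau C X x = 1 + s * μ := by
      rw [hXdef, hC.gau_add_smul_self hx hz.mem hs.le, hμz]
    calc _ ≤ (1 + r * μ) * ((1 + s * μ) / (1 + r * μ)) := by rw [hE3]; gcongr
      _ = gau C X x := by rw [h6]; field_simp
      _ ≤ _ := hC.gau_mul (subset_closure hX) hu hx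
  have h7 : gau C x u * gau C u X ≤ 1 := by
    have p1 := hC.gau_pos' hX hu
    have p2 := hC.gau_pos' hu hx
    unfold hilE at h5
    by_contra hcon
    push Not at hcon
    nlinarith [mul_pos p1 p2]
  have hg : 0 < gau C x u := hC.gau_pos' hx hu
  have hA : gau C x u • u - x ∈ closure C := hC.gau_mem (subset_closure hx) hu
  have hB : X - gau C x u • u ∈ closure C := by
    have := hC.cl_add (hC.cl_smul hg.le (hC.gau_mem (subset_closure hu) hX))
      (hC.cl_smul (sub_nonneg.2 h7) (subset_closure hX))
    convert this using 1
    module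
  obtain ⟨k, hk, hku⟩ := hz.ext (s⁻¹ • (gau C x u • u - x)) (hC.cl_smul (inv_pos.2 hs).le hA) (by
    have := hC.cl_smul (inv_pos.2 hs).le hB
    convert this using 1
    rw [hXdef]
    match_scalars <;> field_simp)
  have hu' : gau C x u • u = x + (s * k) • z := by
    have : s • (s⁻¹ • (gau C x u • u - x)) = s • (k • z) := by rw [hku]
    rw [smul_smul, mul_inv_cancel₀ hs.ne', one_smul, smul_smul] at this
    rw [← this]; abel
  have hsk : s * k = r := by
    have h8 : hilE C x (gau C x u • u) = 1 + r * μ := by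
      rw [hC.hilE_smul_right hx hu hg, hE3]
    rw [hu', hC.hilE_self_add_smul hx hz.mem hz.notMem (by positivity), ← hμz] at h8
    have : (s * k) * μ = r * μ := by linarith
    exact mul_right_cancel₀ hμ0.ne' this
  refine ⟨gau C x u, hg, ?_⟩
  rw [← hsk, ← hu', hT.smul hg hu, hTu, hsk]

/-- The image of a ray in an extreme direction is a ray: the directions found on different finite
stretches agree by `IsPCone.bd_unique`. -/
theorem exists_ray (hC : IsPCone C ℓ) {T : V → V} (hT : IsIso C T) {z x : V}
    (hz : IsExt C z) (hx : x ∈ C) : ∃ a, IsRay C T z x a := by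
  obtain ⟨a, ha, h⟩ := exists_ray_aux hC hT hz hx one_pos
  refine ⟨a, ha, fun s hs => ?_⟩
  rcases le_total s 1 with hs1 | hs1
  · exact h s hs hs1
  obtain ⟨b, hb, h'⟩ := exists_ray_aux hC hT hz hx (lt_of_lt_of_le one_pos hs1)
  obtain ⟨c, hc, h1⟩ := h 1 zero_le_one le_rfl
  obtain ⟨d, hd, h2⟩ := h' 1 zero_le_one hs1
  rw [h1, one_smul, one_smul] at h2
  have := (hC.bd_unique (hT.maps hx) ha.mem ha.notMem hb.mem hb.notMem hc hd h2).2
  subst this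
  exact h' s hs le_rfl

theorem IsRay.shift (hC : IsPCone C ℓ) {T : V → V} {z x a : V} (h : IsRay C T z x a) {r c : ℝ}
    (hr : 0 ≤ r) (hc : 0 < c) (hT : T (x + r • z) = c • (T x + r • a)) :
    IsRay C T z (x + r • z) (c • a) := by
  refine ⟨h.toIsBd.smul hC hc, fun s hs => ?_⟩
  obtain ⟨d, hd, h1⟩ := h.ray (r + s) (by positivity)
  refine ⟨d / c, by positivity, ?_⟩
  have : x + r • z + s • z = x + (r + s) • z := by module
  rw [this, h1, hT]
  match_scalars <;> field_simp

theorem IsRay.smul_point (hC : IsPCone C ℓ) {T : V → V} (hT : IsIso C T) {z x a : V}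
    (hz : z ∈ closure C) (hx : x ∈ C) (h : IsRay C T z x a) {c : ℝ} (hc : 0 < c) :
    IsRay C T z (c • x) a := by
  refine ⟨h.toIsBd, fun s hs => ?_⟩
  obtain ⟨d, hd, h1⟩ := h.ray (s / c) (by positivity)
  refine ⟨d, hd, ?_⟩
  have : c • x + s • z = c • (x + (s / c) • z) := by
    match_scalars <;> field_simp
  rw [this, hT.smul hc (hC.add_smul_mem hx hz (by positivity)), h1, hT.smul hc hx]
  match_scalars <;> field_simp

theorem IsRay.inv (hC : IsPCone C ℓ) {T S : V → V} (hS : IsIso C S) (hST : ∀ x ∈ C, S (T x) = x)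
    (hT : IsIso C T) {z x a : V} (hz : IsBd C z) (hx : x ∈ C) (h : IsRay C T z x a) :
    IsRay C S a (T x) z := by
  refine ⟨hz, fun s hs => ?_⟩
  obtain ⟨c, hc, h1⟩ := h.ray s hs
  refine ⟨c⁻¹, inv_pos.2 hc, ?_⟩
  have hm := hC.add_smul_mem hx hz.mem hs
  have h2 : T x + s • a = c⁻¹ • T (x + s • z) := by
    rw [h1, smul_smul, inv_mul_cancel₀ hc.ne', one_smul]
  rw [h2, hS.smul (inv_pos.2 hc) (hT.maps hm), hST _ hm, hST _ hx]

/-- If `u + s w` lies in the closed cone for arbitrarily large `s`, then so does `w`. -/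
theorem IsPCone.lim_mem (hC : IsPCone C ℓ) {u w : V}
    (h : ∀ N : ℝ, ∃ s, N ≤ s ∧ u + s • w ∈ closure C) : w ∈ closure C := by
  by_contra hw
  have h1 : Filter.Tendsto (fun s : ℝ => s⁻¹ • u + w) Filter.atTop (nhds ((0 : ℝ) • u + w)) :=
    (tendsto_inv_atTop_zero.smul_const u).add_const w
  rw [zero_smul, zero_add] at h1
  have h2 := h1.eventually (isClosed_closure.isOpen_compl.mem_nhds hw)
  obtain ⟨N, hN⟩ := Filter.eventually_atTop.1 (h2.and (Filter.eventually_gt_atTop 0))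
  obtain ⟨s, hs, hm⟩ := h N
  obtain ⟨h3, h4⟩ := hN s hs
  apply h3
  have := hC.cl_smul (inv_pos.2 h4).le hm
  convert this using 1
  match_scalars <;> field_simp

/-- Two boundary rays staying at bounded distance end in the same face. -/
theorem IsPCone.dom_of_bounded (hC : IsPCone C ℓ) {y₁ y₂ a₁ a₂ : V} (hy₁ : y₁ ∈ C)
    (hy₂ : y₂ ∈ C) (h₁ : IsBd C a₁) (h₂ : IsBd C a₂) {B : ℝ}
    (hB : ∀ s : ℝ, 0 ≤ s → hilE C (y₁ + s • a₁) (y₂ + s • a₂) ≤ B) :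
    ∃ k : ℝ, k • a₂ - a₁ ∈ closure C := by
  obtain ⟨f, hf⟩ := hC.exists_supp h₁
  have hf1 := hf.1 _ hy₁
  have hf2 := hf.1 _ hy₂
  refine ⟨B * f y₁ / f y₂, hC.lim_mem (u := (B * f y₁ / f y₂) • y₂ - y₁) fun N => ?_⟩
  refine ⟨max N 0, le_max_left _ _, ?_⟩
  have hs : 0 ≤ max N 0 := le_max_right _ _
  set s := max N 0
  have m1 := hC.add_smul_mem hy₁ h₁.mem hs
  have m2 := hC.add_smul_mem hy₂ h₂.mem hs
  have h3 := hC.map_le hf.1 (subset_closure m2) m1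
  simp only [map_add, map_smul, hf.2, smul_eq_mul, mul_zero, add_zero] at h3
  have h4 : 0 ≤ s * f a₂ := mul_nonneg hs (hf.nonneg hC h₂.mem)
  have h5 := hB s hs
  unfold hilE at h5
  have h6 : gau C (y₁ + s • a₁) (y₂ + s • a₂) ≤ B * f y₁ / f y₂ := by
    rw [le_div_iff₀ hf2]
    have h7 := gau_nonneg C (y₁ + s • a₁) (y₂ + s • a₂)
    calc gau C (y₁ + s • a₁) (y₂ + s • a₂) * f y₂
        ≤ gau C (y₁ + s • a₁) (y₂ + s • a₂) * (gau C (y₂ + s • a₂) (y₁ + s • a₁) * f y₁) :=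
          mul_le_mul_of_nonneg_left (by linarith) h7
      _ = (gau C (y₁ + s • a₁) (y₂ + s • a₂) * gau C (y₂ + s • a₂) (y₁ + s • a₁)) * f y₁ := by
          ring
      _ ≤ B * f y₁ := mul_le_mul_of_nonneg_right h5 hf1.le
  rw [hC.gau_le_iff (subset_closure m1) m2] at h6
  convert h6 using 1
  module

theorem IsPCone.hilE_ray_bounded (hC : IsPCone C ℓ) {x₁ x₂ z : V} (hx₁ : x₁ ∈ C)
    (hx₂ : x₂ ∈ C) (hz : z ∈ closure C) :
    ∃ B : ℝ, ∀ s : ℝ, 0 ≤ s → hilE C (x₁ + s • z) (x₂ + s • z) ≤ B := by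
  have key : ∀ x₁ ∈ C, ∀ x₂ ∈ C, ∀ s : ℝ, 0 ≤ s →
      gau C (x₁ + s • z) (x₂ + s • z) ≤ max (gau C x₁ x₂) 1 := by
    intro x₁ hx₁ x₂ hx₂ s hs
    rw [hC.gau_le_iff (subset_closure (hC.add_smul_mem hx₁ hz hs)) (hC.add_smul_mem hx₂ hz hs)]
    have h1 := (hC.gau_le_iff (subset_closure hx₁) hx₂).1 (le_max_left (gau C x₁ x₂) 1)
    have h2 : 0 ≤ max (gau C x₁ x₂) 1 - 1 := sub_nonneg.2 (le_max_right _ _)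
    have := hC.cl_add h1 (hC.cl_smul (mul_nonneg hs h2) hz)
    convert this using 1
    module
  exact ⟨_, fun s hs => mul_le_mul (key _ hx₁ _ hx₂ s hs) (key _ hx₂ _ hx₁ s hs)
    (gau_nonneg _ _ _) (le_trans zero_le_one (le_max_right _ _))⟩

theorem IsRay.hilE_eq (hC : IsPCone C ℓ) {T : V → V} (hT : IsIso C T) {z₁ z₂ x₁ x₂ a₁ a₂ : V}
    (hz₁ : z₁ ∈ closure C) (hz₂ : z₂ ∈ closure C) (hx₁ : x₁ ∈ C) (hx₂ : x₂ ∈ C)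
    (h₁ : IsRay C T z₁ x₁ a₁) (h₂ : IsRay C T z₂ x₂ a₂) {s t : ℝ} (hs : 0 ≤ s) (ht : 0 ≤ t) :
    hilE C (T x₁ + s • a₁) (T x₂ + t • a₂) = hilE C (x₁ + s • z₁) (x₂ + t • z₂) := by
  obtain ⟨c, hc, e₁⟩ := h₁.ray s hs
  obtain ⟨d, hd, e₂⟩ := h₂.ray t ht
  have m1 := hC.add_smul_mem (hT.maps hx₁) h₁.mem hs
  have m2 := hC.add_smul_mem (hT.maps hx₂) h₂.mem ht
  rw [← hT.iso (hC.add_smul_mem hx₁ hz₁ hs) (hC.add_smul_mem hx₂ hz₂ ht), e₁, e₂,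
    hC.hilE_smul_left m1 (hC.smul hd m2) hc, hC.hilE_smul_right m1 m2 hd]

/-! ### Asymptotic distance between two rays -/

/-- `Q` is the least number with `a₁ ≤ Q a₂` in the order of the closed cone. -/
structure IsDom (C : Set V) (a₁ a₂ : V) (Q : ℝ) : Prop where
  pos : 0 < Q
  mem : Q • a₂ - a₁ ∈ closure C
  le : ∀ m : ℝ, m • a₂ - a₁ ∈ closure C → Q ≤ m

theorem IsPCone.exists_isDom (hC : IsPCone C ℓ) {a₁ a₂ : V} (h₁ : IsBd C a₁) (h₂ : IsBd C a₂)
    (h : ∃ k : ℝ, k • a₂ - a₁ ∈ closure C) : ∃ Q, IsDom C a₁ a₂ Q := by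
  obtain ⟨k, hk⟩ := h
  have hl1 := hC.l_pos h₁.mem h₁.ne
  have hl2 := hC.l_pos h₂.mem h₂.ne
  have hlow : ∀ m ∈ {m : ℝ | m • a₂ - a₁ ∈ closure C}, ℓ a₁ / ℓ a₂ ≤ m := by
    intro m hm
    have := hC.l_nonneg hm
    simp only [map_sub, map_smul, smul_eq_mul] at this
    rw [div_le_iff₀ hl2]; linarith
  have hcl : IsClosed {m : ℝ | m • a₂ - a₁ ∈ closure C} :=
    isClosed_closure.preimage (by fun_prop : Continuous fun m : ℝ => m • a₂ - a₁)
  have hbb : BddBelow {m : ℝ | m • a₂ - a₁ ∈ closure C} := ⟨_, hlow⟩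
  have hmem := hcl.csInf_mem ⟨k, hk⟩ hbb
  exact ⟨_, lt_of_lt_of_le (div_pos hl1 hl2) (hlow _ hmem), hmem, fun m hm => csInf_le hbb hm⟩

/-- Mutual domination with `Q Q' ≤ 1` means proportionality. -/
theorem IsPCone.dom_le_one_iff (hC : IsPCone C ℓ) {a₁ a₂ : V} {Q Q' : ℝ}
    (h : IsDom C a₁ a₂ Q) (h' : IsDom C a₂ a₁ Q') (h₁ : a₁ ∈ closure C) :
    Q * Q' ≤ 1 ↔ ∃ c : ℝ, 0 < c ∧ a₁ = c • a₂ := by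
  constructor
  · intro hQ
    refine ⟨Q, h.pos, ?_⟩
    have h4 := hC.cl_add (hC.cl_smul h.pos.le h'.mem) (hC.cl_smul (sub_nonneg.2 hQ) h₁)
    have h5 : Q • (Q' • a₁ - a₂) + (1 - Q * Q') • a₁ = -(Q • a₂ - a₁) := by module
    rw [h5] at h4
    exact (sub_eq_zero.1 (hC.antisymm h.mem h4)).symm
  · rintro ⟨c, hc, rfl⟩
    have h1 := h.le c (by simpa using hC.zero_cl)
    have h2 := h'.le c⁻¹ (by
      rw [smul_smul, inv_mul_cancel₀ hc.ne', one_smul, sub_self]; exact hC.zero_cl)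
    calc Q * Q' ≤ c * c⁻¹ := mul_le_mul h1 h2 h'.pos.le hc.le
      _ = 1 := mul_inv_cancel₀ hc.ne'

theorem IsPCone.one_le_dom (hC : IsPCone C ℓ) {a₁ a₂ : V} {Q Q' : ℝ} (h₁ : IsBd C a₁)
    (h : IsDom C a₁ a₂ Q) (h' : IsDom C a₂ a₁ Q') : 1 ≤ Q * Q' := by
  have h4 := hC.cl_add (hC.cl_smul h.pos.le h'.mem) h.mem
  have h5 : Q • (Q' • a₁ - a₂) + (Q • a₂ - a₁) = (Q * Q' - 1) • a₁ := by module
  rw [h5] at h4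
  have h6 := hC.l_nonneg h4
  have h7 := hC.l_pos h₁.mem h₁.ne
  simp only [map_smul, smul_eq_mul] at h6
  by_contra hc
  push Not at hc
  nlinarith

theorem IsPCone.tcone_le (hC : IsPCone C ℓ) {a₁ a₂ : V} {Q : ℝ} (h : IsDom C a₁ a₂ Q) :
    tcone C a₁ ⊆ tcone C a₂ := by
  rintro v ⟨s, hs, hv⟩
  refine ⟨s * Q, mul_nonneg hs h.pos.le, ?_⟩
  convert hC.add_smul_mem hv h.mem hs using 1
  module

/-- All functionals supporting at `a` have the same ratio on `y₁` and `y₂`. -/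
def Flat (C : Set V) (a y₁ y₂ : V) : Prop :=
  ∃ c : ℝ, 0 < c ∧ ∀ f, Supp C a f → f y₁ = c * f y₂

/-- A supporting functional at `a` is monotone for the order of the tangent cone. -/
theorem IsPCone.map_le_tcone (hC : IsPCone C ℓ) {a y₁ y₂ : V} {f : V →L[ℝ] ℝ} (hf : Supp C a f)
    (hy₂ : y₂ ∈ C) : f y₁ ≤ gau (tcone C a) y₁ y₂ * f y₂ := by
  have h2 := hf.1 _ hy₂
  rw [← div_le_iff₀ h2]
  refine le_of_forall_gt fun m hm => ?_
  have h3 := ((hC.tcone_isOCone a).gau_lt_iff (subset_tcone a hy₂)).1 hm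
  have h4 := hf.pos_tcone h3.2
  simp only [map_sub, map_smul, smul_eq_mul] at h4
  rw [div_lt_iff₀ h2]; linarith

theorem IsPCone.gau_tcone_pos (hC : IsPCone C ℓ) {a y₁ y₂ : V} (ha : IsBd C a)
    (hy₁ : y₁ ∈ C) (hy₂ : y₂ ∈ C) : 0 < gau (tcone C a) y₁ y₂ := by
  obtain ⟨f, hf⟩ := hC.exists_supp ha
  have h := hC.map_le_tcone (y₁ := y₁) hf hy₂
  have h1 := hf.1 _ hy₁
  have h2 := hf.1 _ hy₂
  by_contra hc
  push Not at hc
  nlinarith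

theorem IsPCone.one_le_gau_tcone (hC : IsPCone C ℓ) {a y₁ y₂ : V} (ha : IsBd C a)
    (hy₁ : y₁ ∈ C) (hy₂ : y₂ ∈ C) :
    1 ≤ gau (tcone C a) y₁ y₂ * gau (tcone C a) y₂ y₁ := by
  obtain ⟨f, hf⟩ := hC.exists_supp ha
  have h := hC.map_le_tcone (y₁ := y₁) hf hy₂
  have h' := hC.map_le_tcone (y₁ := y₂) hf hy₁
  have h1 := hf.1 _ hy₁
  have h2 := hf.1 _ hy₂
  have p1 := gau_nonneg (tcone C a) y₁ y₂
  have : f y₁ ≤ (gau (tcone C a) y₁ y₂ * gau (tcone C a) y₂ y₁) * f y₁ := by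
    calc f y₁ ≤ _ := h
      _ ≤ gau (tcone C a) y₁ y₂ * (gau (tcone C a) y₂ y₁ * f y₁) := by gcongr
      _ = _ := by ring
  by_contra hc
  push Not at hc
  nlinarith

theorem IsPCone.flat_iff (hC : IsPCone C ℓ) {a y₁ y₂ : V} (ha : IsBd C a) (hy₁ : y₁ ∈ C)
    (hy₂ : y₂ ∈ C) :
    Flat C a y₁ y₂ ↔ gau (tcone C a) y₁ y₂ * gau (tcone C a) y₂ y₁ ≤ 1 := by
  have p1 := hC.gau_tcone_pos ha hy₁ hy₂
  have p2 := hC.gau_tcone_pos ha hy₂ hy₁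
  constructor
  · rintro ⟨c, hc, hfl⟩
    have key : ∀ y₁ ∈ C, ∀ y₂ ∈ C, ∀ c : ℝ, 0 < c → (∀ f, Supp C a f → f y₁ = c * f y₂) →
        gau (tcone C a) y₁ y₂ ≤ c := by
      intro y₁ hy₁ y₂ hy₂ c hc hfl
      refine le_of_forall_gt fun m hm => ?_
      refine ((hC.tcone_isOCone a).gau_lt_iff (subset_tcone a hy₂)).2 ⟨hc.trans hm, ?_⟩
      by_contra hcon
      obtain ⟨f, hf, hle⟩ := hC.exists_supp_le ha.mem hcon
      have := hfl f hf
      have h2 := hf.1 _ hy₂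
      simp only [map_sub, map_smul, smul_eq_mul] at hle
      nlinarith
    have k1 := key _ hy₁ _ hy₂ c hc hfl
    have k2 := key _ hy₂ _ hy₁ c⁻¹ (inv_pos.2 hc) fun f hf => by
      rw [hfl f hf]; field_simp
    calc _ ≤ c * c⁻¹ := mul_le_mul k1 k2 p2.le hc.le
      _ = 1 := mul_inv_cancel₀ hc.ne'
  · intro h
    refine ⟨_, p1, fun f hf => le_antisymm (hC.map_le_tcone hf hy₂) ?_⟩
    have h' := hC.map_le_tcone (y₁ := y₂) hf hy₁
    have h1 := hf.1 _ hy₁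
    calc gau (tcone C a) y₁ y₂ * f y₂
        ≤ gau (tcone C a) y₁ y₂ * (gau (tcone C a) y₂ y₁ * f y₁) := by gcongr
      _ = (gau (tcone C a) y₁ y₂ * gau (tcone C a) y₂ y₁) * f y₁ := by ring
      _ ≤ 1 * f y₁ := by gcongr
      _ = f y₁ := one_mul _

section Asymp

variable {Q Q' : ℝ} {y₁ y₂ a₁ a₂ : V}

/-- Upper asymptotic bound for `M(y₁ + s a₁, y₂ + k s a₂)` as `s → ∞`. -/
theorem IsPCone.gau_ray_le (hC : IsPCone C ℓ) (hy₁ : y₁ ∈ C) (hy₂ : y₂ ∈ C)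
    (h₁ : a₁ ∈ closure C) (h₂ : a₂ ∈ closure C) (hQ : IsDom C a₁ a₂ Q) {k m : ℝ} (hk : 0 < k)
    (hm : max (gau (tcone C a₂) y₁ y₂) (Q / k) < m) :
    ∀ᶠ s : ℝ in Filter.atTop, gau C (y₁ + s • a₁) (y₂ + (k * s) • a₂) ≤ m := by
  obtain ⟨hm1, hm2⟩ := max_lt_iff.1 hm
  rw [div_lt_iff₀ hk] at hm2
  obtain ⟨s₀, hs₀, hmem⟩ :=
    (((hC.tcone_isOCone a₂).gau_lt_iff (subset_tcone a₂ hy₂)).1 hm1).2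
  filter_upwards [Filter.eventually_ge_atTop (s₀ / (m * k - Q)), Filter.eventually_ge_atTop 0]
    with s hs hs0
  rw [div_le_iff₀ (by linarith)] at hs
  rw [hC.gau_le_iff (subset_closure (hC.add_smul_mem hy₁ h₁ hs0))
    (hC.add_smul_mem hy₂ h₂ (by positivity))]
  have h3 := hC.add_smul_mem hmem hQ.mem hs0
  have h4 := hC.add_smul_mem h3 h₂ (sub_nonneg.2 hs)
  convert subset_closure h4 using 1
  module

/-- Lower asymptotic bound for `M(y₁ + s a₁, y₂ + k s a₂)` as `s → ∞`. -/
theorem IsPCone.le_gau_ray (hC : IsPCone C ℓ) (hy₁ : y₁ ∈ C) (hy₂ : y₂ ∈ C)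
    (h₁ : a₁ ∈ closure C) (h₂ : a₂ ∈ closure C) (hQ : IsDom C a₁ a₂ Q) {k m : ℝ} (hk : 0 < k)
    (hm : m < max (gau (tcone C a₂) y₁ y₂) (Q / k)) :
    ∀ᶠ s : ℝ in Filter.atTop, m ≤ gau C (y₁ + s • a₁) (y₂ + (k * s) • a₂) := by
  rcases lt_max_iff.1 hm with hm | hm
  · filter_upwards [Filter.eventually_ge_atTop 0] with s hs0
    refine hm.le.trans (le_of_forall_gt fun m hm => ?_)
    have m2 := hC.add_smul_mem hy₂ h₂ (mul_nonneg hk.le hs0)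
    obtain ⟨hm0, h3⟩ := (hC.gau_lt_iff m2).1 hm
    refine ((hC.tcone_isOCone a₂).gau_lt_iff (subset_tcone a₂ hy₂)).2
      ⟨hm0, m * (k * s), by positivity, ?_⟩
    convert hC.add_smul_mem h3 h₁ hs0 using 1
    module
  · by_contra hcon
    rw [Filter.not_eventually] at hcon
    have h4 : (m * k) • a₂ - a₁ ∈ closure C := by
      refine hC.lim_mem (u := m • y₂ - y₁) fun N => ?_
      obtain ⟨s, hs, h5⟩ := (hcon.and_eventually ((Filter.eventually_ge_atTop N).and
        (Filter.eventually_ge_atTop 0))).exists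
      refine ⟨s, h5.1, ?_⟩
      push Not at hs
      have h6 := (hC.gau_le_iff (subset_closure (hC.add_smul_mem hy₁ h₁ h5.2))
        (hC.add_smul_mem hy₂ h₂ (mul_nonneg hk.le h5.2))).1 hs.le
      convert h6 using 1
      module
    have := hQ.le _ h4
    rw [lt_div_iff₀ hk] at hm
    linarith

theorem IsPCone.hilE_ray_le (hC : IsPCone C ℓ) (hy₁ : y₁ ∈ C) (hy₂ : y₂ ∈ C)
    (h₁ : a₁ ∈ closure C) (h₂ : a₂ ∈ closure C) (hQ : IsDom C a₁ a₂ Q) (hQ' : IsDom C a₂ a₁ Q')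
    {k m m' : ℝ} (hk : 0 < k) (hm : max (gau (tcone C a₂) y₁ y₂) (Q / k) < m)
    (hm' : max (gau (tcone C a₁) y₂ y₁) (Q' * k) < m') :
    ∀ᶠ s : ℝ in Filter.atTop, hilE C (y₁ + s • a₁) (y₂ + (k * s) • a₂) ≤ m * m' := by
  have e1 := hC.gau_ray_le hy₁ hy₂ h₁ h₂ hQ hk hm
  have e2 := hC.gau_ray_le hy₂ hy₁ h₂ h₁ hQ' (k := k⁻¹) (inv_pos.2 hk)
    (by rwa [div_inv_eq_mul])
  have e3 := (Filter.tendsto_id.const_mul_atTop hk).eventually e2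
  have hm0 : 0 ≤ m := (le_max_of_le_left (gau_nonneg _ _ _)).trans hm.le
  filter_upwards [e1, e3] with s h3 h4
  simp only [id, inv_mul_cancel_left₀ hk.ne'] at h4
  exact mul_le_mul h3 h4 (gau_nonneg _ _ _) hm0

theorem IsPCone.le_hilE_ray (hC : IsPCone C ℓ) (hy₁ : y₁ ∈ C) (hy₂ : y₂ ∈ C)
    (h₁ : a₁ ∈ closure C) (h₂ : a₂ ∈ closure C) (hQ : IsDom C a₁ a₂ Q) (hQ' : IsDom C a₂ a₁ Q')
    {k m m' : ℝ} (hk : 0 < k) (hm0 : 0 ≤ m') (hm : m < max (gau (tcone C a₂) y₁ y₂) (Q / k))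
    (hm' : m' < max (gau (tcone C a₁) y₂ y₁) (Q' * k)) :
    ∀ᶠ s : ℝ in Filter.atTop, m * m' ≤ hilE C (y₁ + s • a₁) (y₂ + (k * s) • a₂) := by
  have e1 := hC.le_gau_ray hy₁ hy₂ h₁ h₂ hQ hk hm
  have e2 := hC.le_gau_ray hy₂ hy₁ h₂ h₁ hQ' (k := k⁻¹) (inv_pos.2 hk)
    (by rwa [div_inv_eq_mul])
  have e3 := (Filter.tendsto_id.const_mul_atTop hk).eventually e2
  filter_upwards [e1, e3] with s h3 h4
  simp only [id, inv_mul_cancel_left₀ hk.ne'] at h4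
  exact mul_le_mul h3 h4 hm0 (gau_nonneg _ _ _)

/-- Comparison of the asymptotic distances of two pairs of rays. -/
theorem IsPCone.asymp_le (hC : IsPCone C ℓ) (hy₁ : y₁ ∈ C) (hy₂ : y₂ ∈ C)
    (h₁ : a₁ ∈ closure C) (h₂ : a₂ ∈ closure C) (hQ : IsDom C a₁ a₂ Q) (hQ' : IsDom C a₂ a₁ Q')
    {x₁ x₂ b₁ b₂ : V} {q q' : ℝ} (hx₁ : x₁ ∈ C) (hx₂ : x₂ ∈ C)
    (hb₁ : b₁ ∈ closure C) (hb₂ : b₂ ∈ closure C) (hq : IsDom C b₁ b₂ q) (hq' : IsDom C b₂ b₁ q')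
    (h : ∀ s t : ℝ, 0 ≤ s → 0 ≤ t →
      hilE C (y₁ + s • a₁) (y₂ + t • a₂) = hilE C (x₁ + s • b₁) (x₂ + t • b₂))
    {k : ℝ} (hk : 0 < k) :
    max (gau (tcone C a₂) y₁ y₂) (Q / k) * max (gau (tcone C a₁) y₂ y₁) (Q' * k) ≤
      max (gau (tcone C b₂) x₁ x₂) (q / k) * max (gau (tcone C b₁) x₂ x₁) (q' * k) := by
  have key : ∀ m m' : ℝ, 0 ≤ m → 0 ≤ m' → m < max (gau (tcone C a₂) y₁ y₂) (Q / k) →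
      m' < max (gau (tcone C a₁) y₂ y₁) (Q' * k) → ∀ n n' : ℝ,
      max (gau (tcone C b₂) x₁ x₂) (q / k) < n → max (gau (tcone C b₁) x₂ x₁) (q' * k) < n' →
      m * m' ≤ n * n' := by
    intro m m' hm0 hm0' hm hm' n n' hn hn'
    obtain ⟨s, ⟨e1, e2⟩, hs⟩ := (((hC.le_hilE_ray hy₁ hy₂ h₁ h₂ hQ hQ' hk hm0' hm hm').and
      (hC.hilE_ray_le hx₁ hx₂ hb₁ hb₂ hq hq' hk hn hn')).and
      (Filter.eventually_ge_atTop 0)).exists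
    rw [h s (k * s) hs (by positivity)] at e1
    exact e1.trans e2
  have p1 : 0 < max (gau (tcone C a₂) y₁ y₂) (Q / k) := lt_max_of_lt_right (div_pos hQ.pos hk)
  have p2 : 0 < max (gau (tcone C a₁) y₂ y₁) (Q' * k) := lt_max_of_lt_right (mul_pos hQ'.pos hk)
  have p3 : 0 < max (gau (tcone C b₂) x₁ x₂) (q / k) := lt_max_of_lt_right (div_pos hq.pos hk)
  have p4 : 0 < max (gau (tcone C b₁) x₂ x₁) (q' * k) := lt_max_of_lt_right (mul_pos hq'.pos hk)
  generalize max (gau (tcone C a₂) y₁ y₂) (Q / k) = A at *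
  generalize max (gau (tcone C a₁) y₂ y₁) (Q' * k) = A' at *
  generalize max (gau (tcone C b₁) x₂ x₁) (q' * k) = B' at *
  generalize max (gau (tcone C b₂) x₁ x₂) (q / k) = B at *
  -- multiply the four quantities by `1 ± ε` and let `ε → 0`
  have hlim1 : Filter.Tendsto (fun e : ℝ => ((1 - e) * A) * ((1 - e) * A'))
      (nhdsWithin 0 (Ioi 0)) (nhds (A * A')) := by
    have : Continuous fun e : ℝ => ((1 - e) * A) * ((1 - e) * A') := by fun_prop
    simpa using (this.tendsto 0).mono_left nhdsWithin_le_nhds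
  have hlim2 : Filter.Tendsto (fun e : ℝ => ((1 + e) * B) * ((1 + e) * B'))
      (nhdsWithin 0 (Ioi 0)) (nhds (B * B')) := by
    have : Continuous fun e : ℝ => ((1 + e) * B) * ((1 + e) * B') := by fun_prop
    simpa using (this.tendsto 0).mono_left nhdsWithin_le_nhds
  refine le_of_tendsto_of_tendsto hlim1 hlim2 ?_
  filter_upwards [Ioo_mem_nhdsGT (zero_lt_one' ℝ)] with e he
  have he1 := he.1
  have he2 : 0 ≤ 1 - e := by linarith [he.2]
  exact key _ _ (by positivity) (by positivity) (by nlinarith) (by nlinarith) _ _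
    (by nlinarith) (by nlinarith)

end Asymp

theorem IsPCone.isDom_self (hC : IsPCone C ℓ) {a : V} (h : IsBd C a) : IsDom C a a 1 := by
  refine ⟨one_pos, by simpa using hC.zero_cl, fun m hm => ?_⟩
  have := hC.l_nonneg hm
  have h7 := hC.l_pos h.mem h.ne
  simp only [map_sub, map_smul, smul_eq_mul] at this
  by_contra hc
  push Not at hc
  nlinarith

section Dichotomy

variable {T : V → V} {z x₁ x₂ a₁ a₂ : V}

/-- The two image rays of rays ending in the same direction: `P, P'` are the gauges of the
tangent cone, `Q, Q'` the mutual domination constants of the ends, `p, p'` the gauges in the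
source. Both inequalities `(P P') (Q Q') ≤ p p' ≤ max (P P') (Q Q')` come from comparing the
asymptotic distances of the points with parameters `s` and `k s`, for suitable `k`. -/
theorem ray_pair (hC : IsPCone C ℓ) (hT : IsIso C T) (hz : IsBd C z) (hx₁ : x₁ ∈ C)
    (hx₂ : x₂ ∈ C) (h₁ : IsRay C T z x₁ a₁) (h₂ : IsRay C T z x₂ a₂) :
    ∃ Q Q' P P' p p' : ℝ, 0 < P ∧ 0 < P' ∧ 0 < Q ∧ 0 < Q' ∧ 1 ≤ P * P' ∧ 1 ≤ Q * Q' ∧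
      1 ≤ p * p' ∧ (P * P') * (Q * Q') ≤ p * p' ∧ p * p' ≤ max (P * P') (Q * Q') ∧
      (Flat C a₁ (T x₁) (T x₂) ↔ P * P' ≤ 1) ∧ (Flat C z x₁ x₂ ↔ p * p' ≤ 1) ∧
      ((∃ c : ℝ, 0 < c ∧ a₁ = c • a₂) ↔ Q * Q' ≤ 1) := by
  have hy₁ := hT.maps hx₁
  have hy₂ := hT.maps hx₂
  obtain ⟨B, hB⟩ := hC.hilE_ray_bounded hx₁ hx₂ hz.mem
  obtain ⟨B', hB'⟩ := hC.hilE_ray_bounded hx₂ hx₁ hz.mem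
  obtain ⟨Q, hQ⟩ := hC.exists_isDom h₁.toIsBd h₂.toIsBd (hC.dom_of_bounded hy₁ hy₂ h₁.toIsBd
    h₂.toIsBd fun s hs => by
      rw [IsRay.hilE_eq hC hT hz.mem hz.mem hx₁ hx₂ h₁ h₂ hs hs]; exact hB s hs)
  obtain ⟨Q', hQ'⟩ := hC.exists_isDom h₂.toIsBd h₁.toIsBd (hC.dom_of_bounded hy₂ hy₁ h₂.toIsBd
    h₁.toIsBd fun s hs => by
      rw [IsRay.hilE_eq hC hT hz.mem hz.mem hx₂ hx₁ h₂ h₁ hs hs]; exact hB' s hs)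
  have htc : tcone C a₂ = tcone C a₁ := (hC.tcone_le hQ').antisymm (hC.tcone_le hQ)
  have q1 := hC.isDom_self hz
  have cmp1 := fun k hk => hC.asymp_le hy₁ hy₂ h₁.mem h₂.mem hQ hQ' hx₁ hx₂ hz.mem hz.mem q1 q1
    (fun s t hs ht => IsRay.hilE_eq hC hT hz.mem hz.mem hx₁ hx₂ h₁ h₂ hs ht) (k := k) hk
  have cmp2 := fun k hk => hC.asymp_le hx₁ hx₂ hz.mem hz.mem q1 q1 hy₁ hy₂ h₁.mem h₂.mem hQ hQ'
    (fun s t hs ht => (IsRay.hilE_eq hC hT hz.mem hz.mem hx₁ hx₂ h₁ h₂ hs ht).symm) (k := k) hk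
  rw [htc] at cmp1 cmp2
  refine ⟨Q, Q', gau (tcone C a₁) (T x₁) (T x₂), gau (tcone C a₁) (T x₂) (T x₁),
    gau (tcone C z) x₁ x₂, gau (tcone C z) x₂ x₁, hC.gau_tcone_pos h₁.toIsBd hy₁ hy₂,
    hC.gau_tcone_pos h₁.toIsBd hy₂ hy₁, hQ.pos, hQ'.pos, hC.one_le_gau_tcone h₁.toIsBd hy₁ hy₂,
    hC.one_le_dom h₁.toIsBd hQ hQ', hC.one_le_gau_tcone hz hx₁ hx₂, ?_, ?_,
    hC.flat_iff h₁.toIsBd hy₁ hy₂, hC.flat_iff hz hx₁ hx₂,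
    (hC.dom_le_one_iff hQ hQ' h₁.mem).symm⟩
  · have pP := hC.gau_tcone_pos h₁.toIsBd hy₁ hy₂
    have pP' := hC.gau_tcone_pos h₁.toIsBd hy₂ hy₁
    have pp := hC.gau_tcone_pos hz hx₁ hx₂
    have pp' := hC.gau_tcone_pos hz hx₂ hx₁
    have pQ := hQ.pos
    have pQ' := hQ'.pos
    generalize gau (tcone C a₁) (T x₁) (T x₂) = P at *
    generalize gau (tcone C a₁) (T x₂) (T x₁) = P' at *
    generalize gau (tcone C z) x₂ x₁ = p' at *
    generalize gau (tcone C z) x₁ x₂ = p at *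
    -- `k` large gives `P Q' ≤ p`
    have e1 : P * Q' ≤ p := by
      set k := max p' p⁻¹ with hk
      have hk0 : 0 < k := lt_max_of_lt_left pp'
      have h3 := cmp1 k hk0
      have h4 : max p (1 / k) = p := max_eq_left (by
        rw [one_div]; exact inv_le_of_inv_le₀ pp (le_max_right _ _))
      have h5 : max p' (1 * k) = k := by rw [one_mul]; exact max_eq_right (le_max_left _ _)
      rw [h4, h5] at h3
      have h6 : P * (Q' * k) ≤ p * k := le_trans (mul_le_mul (le_max_left _ _) (le_max_right _ _)
        (by positivity) (by positivity)) h3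
      rw [← mul_assoc] at h6
      exact le_of_mul_le_mul_right h6 hk0
    -- `k` small gives `P' Q ≤ p'`
    have e2 : P' * Q ≤ p' := by
      set k := min p' p⁻¹ with hk
      have hk0 : 0 < k := lt_min pp' (inv_pos.2 pp)
      have h3 := cmp1 k hk0
      have h4 : max p (1 / k) = 1 / k := max_eq_right (by
        rw [one_div]; exact le_inv_of_le_inv₀ hk0 (min_le_right _ _))
      have h5 : max p' (1 * k) = p' := by rw [one_mul]; exact max_eq_left (min_le_left _ _)
      rw [h4, h5] at h3
      have h6 : (Q / k) * P' ≤ 1 / k * p' := le_trans (mul_le_mul (le_max_right _ _)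
        (le_max_left _ _) (by positivity) (by positivity)) h3
      have h7 : (Q / k) * P' = (P' * Q) * k⁻¹ := by field_simp
      rw [h7, one_div, mul_comm k⁻¹] at h6
      exact le_of_mul_le_mul_right h6 (inv_pos.2 hk0)
    calc P * P' * (Q * Q') = (P * Q') * (P' * Q) := by ring
      _ ≤ p * p' := mul_le_mul e1 e2 (by positivity) pp.le
  · have pP := hC.gau_tcone_pos h₁.toIsBd hy₁ hy₂
    have pP' := hC.gau_tcone_pos h₁.toIsBd hy₂ hy₁
    have pp := hC.gau_tcone_pos hz hx₁ hx₂
    have pp' := hC.gau_tcone_pos hz hx₂ hx₁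
    have h3 := cmp2 (Q / gau (tcone C a₁) (T x₁) (T x₂)) (div_pos hQ.pos pP)
    have pQ := hQ.pos
    have pQ' := hQ'.pos
    generalize gau (tcone C a₁) (T x₁) (T x₂) = P at *
    generalize gau (tcone C a₁) (T x₂) (T x₁) = P' at *
    generalize gau (tcone C z) x₁ x₂ = p at *
    generalize gau (tcone C z) x₂ x₁ = p' at *
    have h4 : Q / (Q / P) = P := by field_simp
    rw [h4, max_self] at h3
    have h5 : P * max P' (Q' * (Q / P)) = max (P * P') (Q * Q') := by
      rw [mul_max_of_nonneg _ _ pP.le]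
      congr 1
      field_simp
    rw [h5] at h3
    exact (mul_le_mul (le_max_left _ _) (le_max_left _ _) pp'.le
      (le_max_of_le_left pp.le)).trans h3

/-- For two rays in the same direction, either all functionals supporting at the end of the first
image ray have the same ratio on the two image origins, or the two image ends are proportional: the
inequalities of `ray_pair` give `(P P') (Q Q') ≤ max (P P') (Q Q')`, so that `P P'` or `Q Q'` is `1`. -/
theorem ray_dichotomy (hC : IsPCone C ℓ) (hT : IsIso C T) (hz : IsBd C z) (hx₁ : x₁ ∈ C)
    (hx₂ : x₂ ∈ C) (h₁ : IsRay C T z x₁ a₁) (h₂ : IsRay C T z x₂ a₂) :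
    Flat C a₁ (T x₁) (T x₂) ∨ ∃ c : ℝ, 0 < c ∧ a₁ = c • a₂ := by
  obtain ⟨Q, Q', P, P', p, p', -, -, -, -, h3, h4, -, h5, h6, h7, -, h8⟩ :=
    ray_pair hC hT hz hx₁ hx₂ h₁ h₂
  rw [h7, h8]
  by_contra hcon
  push Not at hcon
  have h9 := h5.trans h6
  rcases le_max_iff.1 h9 with h | h <;> nlinarith

/-- If the origins are flat with respect to the common end `z`, the image ends are proportional. -/
theorem prop_of_flat (hC : IsPCone C ℓ) (hT : IsIso C T) (hz : IsBd C z) (hx₁ : x₁ ∈ C)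
    (hx₂ : x₂ ∈ C) (h₁ : IsRay C T z x₁ a₁) (h₂ : IsRay C T z x₂ a₂)
    (hf : Flat C z x₁ x₂) : ∃ c : ℝ, 0 < c ∧ a₁ = c • a₂ := by
  obtain ⟨Q, Q', P, P', p, p', -, -, -, -, h3, h4, -, h5, h6, h7, h10, h8⟩ :=
    ray_pair hC hT hz hx₁ hx₂ h₁ h₂
  rw [h8]
  have := h10.1 hf
  nlinarith

/-- If the image rays are flat and have proportional ends, the source rays are flat. -/
theorem flat_of_prop (hC : IsPCone C ℓ) (hT : IsIso C T) (hz : IsBd C z) (hx₁ : x₁ ∈ C)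
    (hx₂ : x₂ ∈ C) (h₁ : IsRay C T z x₁ a₁) (h₂ : IsRay C T z x₂ a₂)
    (hf : Flat C a₁ (T x₁) (T x₂)) (hp : ∃ c : ℝ, 0 < c ∧ a₁ = c • a₂) : Flat C z x₁ x₂ := by
  obtain ⟨Q, Q', P, P', p, p', -, -, -, -, h3, h4, -, h5, h6, h7, h10, h8⟩ :=
    ray_pair hC hT hz hx₁ hx₂ h₁ h₂
  rw [h10]
  exact h6.trans (max_le (h7.1 hf) (h8.1 hp))

end Dichotomy

/-! ### Focusing directions -/

/-- The direction `z` is focusing for `T`: the images of all rays in the direction `z` end at the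
same boundary point. -/
def Foc (C : Set V) (T : V → V) (z : V) : Prop :=
  ∃ a, IsBd C a ∧ ∀ x ∈ C, ∃ k : ℝ, 0 < k ∧ IsRay C T z x (k • a)

theorem IsPCone.clm_ext (hC : IsPCone C ℓ) {f g : V →L[ℝ] ℝ} (h : ∀ x ∈ C, f x = g x) :
    f = g := by
  obtain ⟨y, hy⟩ := hC.nonempty
  ext v
  obtain ⟨m, -, hm⟩ := hC.exists_mem hy v
  have h1 := h _ hm
  have h2 := h _ hy
  simp only [map_sub, map_smul, smul_eq_mul, h2] at h1
  linarith

theorem smooth_of (hC : IsPCone C ℓ) {a : V} {f₀ : V →L[ℝ] ℝ} (h₀ : Supp C a f₀)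
    (h : ∀ f, Supp C a f → ∃ k : ℝ, ∀ x ∈ C, f x = k * f₀ x) : Smooth C a := by
  intro f f' hf hf'
  obtain ⟨k, hk⟩ := h f hf
  obtain ⟨k', hk'⟩ := h f' hf'
  obtain ⟨y, hy⟩ := hC.nonempty
  have h1 := h₀.1 y hy
  have h2 := hf.1 y hy
  have h3 := hf'.1 y hy
  rw [hk y hy] at h2
  rw [hk' y hy] at h3
  have hk0 : 0 < k := pos_of_mul_pos_left h2 h1.le
  have hk0' : 0 < k' := pos_of_mul_pos_left h3 h1.le
  refine ⟨k' / k, by positivity, hC.clm_ext fun x hx => ?_⟩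
  rw [smul_apply, hk x hx, hk' x hx, smul_eq_mul]
  field_simp

theorem foc_of_prop (hC : IsPCone C ℓ) {T : V → V} (hT : IsIso C T) {z : V} (hz : IsExt C z)
    (h : ∀ x₁ ∈ C, ∀ x₂ ∈ C, ∀ a₁ a₂, IsRay C T z x₁ a₁ → IsRay C T z x₂ a₂ →
      ∃ c : ℝ, 0 < c ∧ a₁ = c • a₂) : Foc C T z := by
  obtain ⟨x₀, hx₀⟩ := hC.nonempty
  obtain ⟨a, ha⟩ := exists_ray hC hT hz hx₀
  refine ⟨a, ha.toIsBd, fun x hx => ?_⟩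
  obtain ⟨b, hb⟩ := exists_ray hC hT hz hx
  obtain ⟨c, hc, rfl⟩ := h x hx x₀ hx₀ b a hb ha
  exact ⟨c, hc, hb⟩

theorem prop_trans {a b c : V} (h : ∃ k : ℝ, 0 < k ∧ a = k • b) (h' : ∃ k : ℝ, 0 < k ∧ b = k • c) :
    ∃ k : ℝ, 0 < k ∧ a = k • c := by
  obtain ⟨k, hk, rfl⟩ := h
  obtain ⟨l, hl, rfl⟩ := h'
  exact ⟨k * l, by positivity, by rw [smul_smul]⟩

theorem prop_symm {a b : V} (h : ∃ k : ℝ, 0 < k ∧ a = k • b) : ∃ k : ℝ, 0 < k ∧ b = k • a := by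
  obtain ⟨k, hk, rfl⟩ := h
  exact ⟨k⁻¹, inv_pos.2 hk, by rw [smul_smul, inv_mul_cancel₀ hk.ne', one_smul]⟩

/-- If `z` is not focusing, every pair of image rays is flat: two ends that are proportional are
compared through a third, non-proportional one. -/
theorem flat_of_not_foc (hC : IsPCone C ℓ) {T : V → V} (hT : IsIso C T) {z : V}
    (hz : IsExt C z) (hn : ¬ Foc C T z) {x₁ x₂ a₁ : V} (hx₁ : x₁ ∈ C) (hx₂ : x₂ ∈ C)
    (h₁ : IsRay C T z x₁ a₁) : Flat C a₁ (T x₁) (T x₂) := by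
  obtain ⟨a₂, h₂⟩ := exists_ray hC hT hz hx₂
  rcases ray_dichotomy hC hT hz.toIsBd hx₁ hx₂ h₁ h₂ with h | hp
  · exact h
  obtain ⟨w, hw, b, hb, hnb⟩ : ∃ w ∈ C, ∃ b, IsRay C T z w b ∧ ¬ ∃ c : ℝ, 0 < c ∧ a₁ = c • b := by
    by_contra hcon
    push Not at hcon
    refine hn (foc_of_prop hC hT hz fun w₁ hw₁ w₂ hw₂ b₁ b₂ hb₁ hb₂ => ?_)
    exact prop_trans (prop_symm (hcon w₁ hw₁ b₁ hb₁)) (hcon w₂ hw₂ b₂ hb₂)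
  obtain ⟨c, hc, hf⟩ := (ray_dichotomy hC hT hz.toIsBd hx₁ hw h₁ hb).resolve_right hnb
  obtain ⟨d, hd, hg⟩ := (ray_dichotomy hC hT hz.toIsBd hx₂ hw h₂ hb).resolve_right
    fun h => hnb (prop_trans hp h)
  refine ⟨c / d, by positivity, fun f hs => ?_⟩
  have hs2 : Supp C a₂ f := by
    refine ⟨hs.1, ?_⟩
    obtain ⟨k, hk, rfl⟩ := hp
    have := hs.2
    simpa [hk.ne'] using this
  rw [hf f hs, hg f hs2]
  field_simp

/-- If `z` is not focusing, the ends of all image rays are smooth boundary points. -/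
theorem smooth_of_not_foc (hC : IsPCone C ℓ) {T : V → V} (hT : IsIso C T) {z : V}
    (hz : IsExt C z) (hn : ¬ Foc C T z) {x a : V} (hx : x ∈ C)
    (h : IsRay C T z x a) : Smooth C a := by
  obtain ⟨f₀, h₀⟩ := hC.exists_supp h.toIsBd
  refine smooth_of hC h₀ fun f hf => ⟨f (T x) / f₀ (T x), fun v hv => ?_⟩
  obtain ⟨u, hu, rfl⟩ := hT.surj hv
  obtain ⟨c, hc, hfl⟩ := flat_of_not_foc hC hT hz hn hx hu h
  have := (h₀.1 _ hv).ne'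
  rw [hfl f hf, hfl f₀ h₀]
  field_simp

/-- A smooth extreme direction is focusing: smoothness makes every pair of origins flat. -/
theorem foc_of_smooth (hC : IsPCone C ℓ) {T : V → V} (hT : IsIso C T) {z : V}
    (hz : IsExt C z) (hs : Smooth C z) : Foc C T z := by
  refine foc_of_prop hC hT hz fun x₁ hx₁ x₂ hx₂ a₁ a₂ h₁ h₂ =>
    prop_of_flat hC hT hz.toIsBd hx₁ hx₂ h₁ h₂ ?_
  obtain ⟨f₀, h₀⟩ := hC.exists_supp hz.toIsBd
  have p1 := h₀.1 _ hx₁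
  have p2 := h₀.1 _ hx₂
  refine ⟨f₀ x₁ / f₀ x₂, by positivity, fun f hf => ?_⟩
  obtain ⟨c, hc, rfl⟩ := hs f₀ f h₀ hf
  simp only [smul_apply, smul_eq_mul]
  field_simp

/-- A boundary vector dominated by an extreme vector is proportional to it. -/
theorem IsExt.prop_of_dom (hC : IsPCone C ℓ) {z₁ z₂ : V} (h₂ : IsExt C z₂) (h₁ : IsBd C z₁)
    {k : ℝ} (hk : k • z₂ - z₁ ∈ closure C) : ∃ c : ℝ, 0 < c ∧ z₁ = c • z₂ := by
  have hl1 := hC.l_pos h₁.mem h₁.ne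
  have hl2 := hC.l_pos h₂.mem h₂.ne
  have hk0 : 0 < k := by
    have := hC.l_nonneg hk
    simp only [map_sub, map_smul, smul_eq_mul] at this
    by_contra hc
    push Not at hc
    nlinarith
  obtain ⟨c, hc, h⟩ := h₂.ext (k⁻¹ • z₁) (hC.cl_smul (inv_pos.2 hk0).le h₁.mem) (by
    have := hC.cl_smul (inv_pos.2 hk0).le hk
    rwa [smul_sub, smul_smul, inv_mul_cancel₀ hk0.ne', one_smul] at this)
  have h3 : z₁ = (k * c) • z₂ := by
    rw [← smul_smul, ← h, smul_smul, mul_inv_cancel₀ hk0.ne', one_smul]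
  refine ⟨k * c, lt_of_le_of_ne (by positivity) fun h0 => h₁.ne ?_, h3⟩
  rw [h3, ← h0, zero_smul]

/-- In the plane spanned by `z₁, z₂` the gauge of `z₁` only sees the `z₁`-coordinate. -/
theorem IsPCone.gau_plane (hC : IsPCone C ℓ) {z₁ z₂ x : V} (h₁ : z₁ ∈ closure C)
    (h₂ : IsBd C z₂) (hx : x ∈ C) {p q : ℝ} (hp : 0 < p) (hq : 0 ≤ q)
    (h : x = p • z₁ + q • z₂) : gau C z₁ x = 1 / p := by
  apply le_antisymm
  · rw [hC.gau_le_iff h₁ hx, h]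
    have := hC.cl_smul (div_nonneg hq hp.le) h₂.mem
    convert this using 1
    match_scalars <;> field_simp
    ring
  · obtain ⟨f, hf⟩ := hC.exists_supp h₂
    have h3 := hC.map_le hf.1 h₁ hx
    have h4 := hf.1 _ hx
    have h5 : f x = p * f z₁ := by rw [h]; simp [hf.2]
    rw [h5] at h3 h4
    have h6 : 0 < f z₁ := pos_of_mul_pos_right h4 hp.le
    rw [div_le_iff₀ hp]
    nlinarith

theorem IsPCone.li_pair (hC : IsPCone C ℓ) {a₁ a₂ : V} (h₁ : IsBd C a₁) (h₂ : IsBd C a₂)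
    (hn : ¬ ∃ c : ℝ, 0 < c ∧ a₁ = c • a₂) {q r : ℝ} (h : q • a₁ + r • a₂ = 0) :
    q = 0 ∧ r = 0 := by
  have hl1 := hC.l_pos h₁.mem h₁.ne
  have hl2 := hC.l_pos h₂.mem h₂.ne
  by_cases hq : q = 0
  · subst hq
    rw [zero_smul, zero_add] at h
    exact ⟨rfl, (smul_eq_zero.1 h).resolve_right h₂.ne⟩
  · exfalso
    have h3 : a₁ = (-r / q) • a₂ := by
      have : q • a₁ = (-r) • a₂ := by rw [neg_smul]; exact eq_neg_of_add_eq_zero_left h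
      rw [div_eq_inv_mul, ← smul_smul, ← this, smul_smul, inv_mul_cancel₀ hq, one_smul]
    refine hn ⟨_, ?_, h3⟩
    rw [h3] at hl1
    simp only [map_smul, smul_eq_mul] at hl1
    exact pos_of_mul_pos_left hl1 hl2.le

/-- If `z₁` is focusing, the image of the sector `x + s z₂ + t z₁` is the sector
`T x + s a₂ + t a₁`. By the focusing property, the ray in direction `z₁` from `x + s z₂` is mapped to
the ray in some direction `k(s) a₁`, up to scaling; the point is that `k` is constantly `1`. -/
theorem plane_aux (hC : IsPCone C ℓ) {T : V → V} (hT : IsIso C T) {z₁ z₂ : V}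
    (hz₁ : IsExt C z₁) (hz₂ : IsExt C z₂) (hF : Foc C T z₁)
    (hn : ¬ ∃ c : ℝ, 0 < c ∧ z₁ = c • z₂) {x a₁ a₂ : V} (hx : x ∈ C)
    (h₁ : IsRay C T z₁ x a₁) (h₂ : IsRay C T z₂ x a₂) {s d : ℝ} (hs : 0 ≤ s) (hd : 0 < d)
    (hsd : T (x + s • z₂) = d • (T x + s • a₂)) : IsRay C T z₁ (x + s • z₂) (d • a₁) := by
  set y := T x with hydef
  have hy : y ∈ C := hT.maps hx
  -- the ends `a₁`, `a₂` are not proportional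
  have hna : ¬ ∃ c : ℝ, 0 < c ∧ a₁ = c • a₂ := by
    rintro ⟨c, hc, hca⟩
    obtain ⟨k, hk⟩ := hC.dom_of_bounded hx hx hz₁.toIsBd (hz₂.toIsBd.smul hC hc) (B := 1)
      fun t ht => by
        rw [smul_smul, ← IsRay.hilE_eq hC hT hz₁.mem hz₂.mem hx hx h₁ h₂ ht
          (mul_nonneg ht hc.le), hca, smul_smul]
        unfold hilE
        rw [hC.gau_self (hC.add_smul_mem hy h₂.mem (mul_nonneg ht hc.le)), one_mul]
    rw [smul_smul] at hk
    exact hn (hz₂.prop_of_dom hC hz₁.toIsBd hk)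
  have hli := fun q r => hC.li_pair h₁.toIsBd h₂.toIsBd hna (q := q) (r := r)
  -- the rays in direction `z₁` issuing from `x + s z₂`
  have hk : ∀ s : ℝ, 0 ≤ s → ∃ k d : ℝ, 0 < k ∧ 0 < d ∧ T (x + s • z₂) = d • (y + s • a₂) ∧
      IsRay C T z₁ (x + s • z₂) (d • k • a₁) := by
    intro s hs
    obtain ⟨a, ha, hall⟩ := hF
    obtain ⟨k₀, hk₀, hr₀⟩ := hall x hx
    obtain ⟨k₁, hk₁, hr₁⟩ := hall _ (hC.add_smul_mem hx hz₂.mem hs)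
    have e : a₁ = k₀ • a := h₁.unique hC hT hx hr₀
    obtain ⟨d, hd, hT1⟩ := h₂.ray s hs
    refine ⟨k₁ / k₀ / d, d, by positivity, hd, hT1, ?_⟩
    have : d • (k₁ / k₀ / d) • a₁ = k₁ • a := by
      rw [e]; match_scalars; field_simp
    rw [this]; exact hr₁
  choose! k D hk0 hD0 hkT hkR using hk
  have hsec : ∀ s t : ℝ, 0 ≤ s → 0 ≤ t → ∃ c : ℝ, 0 < c ∧
      T (x + s • z₂ + t • z₁) = c • (y + s • a₂ + (t * k s) • a₁) := by
    intro s t hs ht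
    obtain ⟨c, hc, h⟩ := (hkR s hs).ray t ht
    refine ⟨c * D s, mul_pos hc (hD0 s hs), ?_⟩
    rw [h, hkT s hs]
    module
  -- it suffices that `k s = 1`
  suffices hk1 : k s = 1 by
    have hds : d = D s := (hC.bd_unique hy (hC.cl_smul hs h₂.mem) (hC.smul_notMem h₂.notMem hs)
      (hC.cl_smul hs h₂.mem) (hC.smul_notMem h₂.notMem hs) hd (hD0 s hs)
      (by rw [← hsd, ← hkT s hs])).1
    have := hkR s hs
    rwa [hk1, one_smul, ← hds] at this
  rcases hs.eq_or_lt with rfl | hs0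
  · have h3 := hkR 0 le_rfl
    have h4 := hkT 0 le_rfl
    simp only [zero_smul, add_zero] at h3 h4
    have h5 := h₁.unique hC hT hx h3
    rw [← hydef] at h4
    have h6 : D 0 = 1 := by
      have : (D 0 - 1) • y = 0 := by rw [sub_smul, one_smul, ← h4, sub_self]
      rcases smul_eq_zero.1 this with h | h
      · linarith
      · exact absurd h (hC.ne_zero hy)
    rw [h6, one_smul] at h5
    have : (k 0 - 1) • a₁ = 0 := by rw [sub_smul, one_smul, ← h5, sub_self]
    rcases smul_eq_zero.1 this with h | h
    · linarith
    · exact absurd h h₁.ne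
  by_cases hspan : ∃ p q : ℝ, y = p • a₁ + q • a₂
  -- If `T x` is in the plane of `a₁`, `a₂`, then `x` is in the plane of `z₁`, `z₂`, and the gauges
  -- of `z₁` and `a₁` do not change along the rays in the directions `z₂` and `a₂`.
  · obtain ⟨p, q, hpq⟩ := hspan
    have pos : ∀ {a b : V} {p q : ℝ}, IsBd C a → IsBd C b → y = p • a + q • b → 0 < p := by
      intro a b p q ha hb h
      by_contra hp
      push Not at hp
      have h3 : q • b ∈ C := by
        have := hC.add_smul_mem hy ha.mem (neg_nonneg.2 hp)
        convert this using 1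
        rw [h]; module
      rcases le_total 0 q with hq | hq
      · exact hC.smul_notMem hb.notMem hq h3
      · have h4 := hC.l_nonneg hb.mem
        have h5 := hC.pos h3
        simp only [map_smul, smul_eq_mul] at h5
        nlinarith
    have hp0 := pos h₁.toIsBd h₂.toIsBd hpq
    have hq0 := pos h₂.toIsBd h₁.toIsBd (by rw [hpq, add_comm])
    -- some point of the source sector is mapped to a multiple of `y`
    have hkq := hk0 q hq0.le
    obtain ⟨c, hc, h3⟩ := hsec q (p / k q) hq0.le (by positivity)
    have h4 : x + q • z₂ + (p / k q) • z₁ = (c * 2) • x := by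
      refine hT.inj_smul hC (hC.add_smul_mem (hC.add_smul_mem hx hz₂.mem hq0.le) hz₁.mem
        (by positivity)) hx (by positivity) ?_
      rw [h3, div_mul_cancel₀ _ hkq.ne', ← hydef, ← smul_smul, two_smul]
      congr 1
      nth_rewrite 3 [hpq]
      abel
    have hl1 := hC.l_pos hz₁.mem hz₁.ne
    have hl2 := hC.l_pos hz₂.mem hz₂.ne
    have hl3 := hC.pos hx
    have hpk : 0 < p / k q := by positivity
    have h5 : 0 < c * 2 - 1 := by
      have := congrArg ℓ h4
      simp only [map_add, map_smul, smul_eq_mul] at this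
      by_contra hcon
      push Not at hcon
      nlinarith [mul_pos hq0 hl2, mul_pos hpk hl1]
    have h6 : x = ((p / k q) / (c * 2 - 1)) • z₁ + (q / (c * 2 - 1)) • z₂ := by
      have : (c * 2 - 1) • x = (p / k q) • z₁ + q • z₂ := by
        rw [sub_smul, ← h4]; module
      rw [← one_smul ℝ x, ← inv_mul_cancel₀ h5.ne', ← smul_smul, this]
      match_scalars <;> field_simp
    set p' := (p / k q) / (c * 2 - 1)
    set q' := q / (c * 2 - 1)
    have hp' : 0 < p' := by positivity
    have hq' : 0 < q' := by positivity
    have g1 : gau C z₁ x = 1 / p' := hC.gau_plane hz₁.mem hz₂.toIsBd hx hp' hq'.le h6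
    have hxs := hC.add_smul_mem hx hz₂.mem hs
    have g2 : gau C z₁ (x + s • z₂) = 1 / p' :=
      hC.gau_plane (q := q' + s) hz₁.mem hz₂.toIsBd hxs hp' (by positivity)
        (by nth_rewrite 1 [h6]; module)
    have hys := hC.add_smul_mem hy h₂.mem hs
    have g3 : gau C a₁ y = 1 / p := hC.gau_plane h₁.mem h₂.toIsBd hy hp0 hq0.le hpq
    have g4 : gau C a₁ (y + s • a₂) = 1 / p :=
      hC.gau_plane (q := q + s) h₁.mem h₂.toIsBd hys hp0 (by positivity)
        (by nth_rewrite 1 [hpq]; module)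
    have g5 := h₁.gau_eq hC hT hz₁.toIsBd hx
    have g6 := (hkR s hs).gau_eq hC hT hz₁.toIsBd hxs
    have hDs := hD0 s hs
    rw [hkT s hs, smul_smul, hC.gau_smul_left h₁.mem (hC.smul hDs hys)
      (mul_pos hDs (hk0 s hs)), hC.gau_smul_right h₁.mem hys hDs, g4, g2, ← g1, ← g5, g3] at g6
    field_simp at g6
    linarith
  -- Otherwise `T x`, `a₁`, `a₂` are independent. Comparison with the image of the ray in direction
  -- `z₂` issuing from `x + z₁` gives `k(s) = 1 + s β` with `β ≥ 0`, and it remains to exclude `β > 0`.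
  · have hx1 := hC.add_smul_mem hx hz₁.mem zero_le_one
    obtain ⟨b', hb'⟩ := exists_ray hC hT hz₂ hx1
    obtain ⟨d₁, hd₁, hT1⟩ := h₁.ray 1 zero_le_one
    have hli3 : ∀ p q r : ℝ, p • y + q • a₁ + r • a₂ = 0 → p = 0 ∧ q = 0 ∧ r = 0 := by
      intro p q r h
      have hp : p = 0 := by
        by_contra hp
        refine hspan ⟨-q / p, -r / p, ?_⟩
        have : p • y = (-q) • a₁ + (-r) • a₂ := by
          rw [← sub_eq_zero, ← h]; module
        rw [← one_smul ℝ y, ← inv_mul_cancel₀ hp, ← smul_smul, this]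
        match_scalars <;> field_simp
      subst hp
      rw [zero_smul, zero_add] at h
      exact ⟨rfl, hli q r h⟩
    obtain ⟨b, hb⟩ : ∃ b, b = d₁⁻¹ • b' := ⟨_, rfl⟩
    have hbd : IsBd C b := hb ▸ hb'.toIsBd.smul hC (inv_pos.2 hd₁)
    have hcomp : ∀ s : ℝ, 0 ≤ s → ∃ e : ℝ, 0 < e ∧
        y + s • a₂ + k s • a₁ = e • (y + a₁ + s • b) := by
      intro s hs
      obtain ⟨c, hc, h3⟩ := hsec s 1 hs zero_le_one
      obtain ⟨c', hc', h4⟩ := hb'.ray s hs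
      have h5 : x + (1 : ℝ) • z₁ + s • z₂ = x + s • z₂ + (1 : ℝ) • z₁ := by abel
      have hb2 : b' = d₁ • b := by rw [hb, smul_smul, mul_inv_cancel₀ hd₁.ne', one_smul]
      rw [h5, h3, hT1, hb2, one_mul] at h4
      refine ⟨c⁻¹ * (c' * d₁), by positivity, ?_⟩
      rw [← one_smul ℝ (y + s • a₂ + k s • a₁), ← inv_mul_cancel₀ hc.ne', ← smul_smul, h4]
      module
    obtain ⟨e₁, he₁, E1⟩ := hcomp 1 zero_le_one
    obtain ⟨e₂, he₂, E2⟩ := hcomp 2 zero_le_two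
    obtain ⟨l, β, γ, hbe⟩ : ∃ l β γ : ℝ, b = l • y + β • a₁ + γ • a₂ := by
      refine ⟨e₁⁻¹ - 1, e₁⁻¹ * k 1 - 1, e₁⁻¹, ?_⟩
      have : b = e₁⁻¹ • (e₁ • (y + a₁ + (1 : ℝ) • b)) - y - a₁ := by
        rw [smul_smul, inv_mul_cancel₀ he₁.ne']; module
      rw [this, ← E1]
      module
    have coef : ∀ s e : ℝ, y + s • a₂ + k s • a₁ = e • (y + a₁ + s • b) →
        1 = e * (1 + s * l) ∧ k s = e * (1 + s * β) ∧ s = e * (s * γ) := by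
      intro s e h
      have := hli3 (1 - e * (1 + s * l)) (k s - e * (1 + s * β)) (s - e * (s * γ)) (by
        rw [hbe] at h
        rw [← sub_eq_zero] at h
        rw [← h]; module)
      exact ⟨by linarith [this.1], by linarith [this.2.1], by linarith [this.2.2]⟩
    obtain ⟨u1, -, u3⟩ := coef 1 e₁ E1
    obtain ⟨v1, -, v3⟩ := coef 2 e₂ E2
    have hγ : γ ≠ 0 := by rintro rfl; simp at u3
    have he12 : e₁ = e₂ := by
      have : e₁ * γ = e₂ * γ := by linarith
      exact mul_right_cancel₀ hγ this
    have hl : l = 0 := by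
      rw [← he12] at v1
      have : e₁ * l = 0 := by linarith
      exact (mul_eq_zero.1 this).resolve_left he₁.ne'
    have he1 : e₁ = 1 := by rw [hl] at u1; linarith
    have hγ1 : γ = 1 := by rw [he1] at u3; linarith
    subst hl hγ1
    have hks : ∀ s : ℝ, 0 ≤ s → k s = 1 + s * β := by
      intro s hs
      obtain ⟨e, he, h⟩ := hcomp s hs
      obtain ⟨w1, w2, -⟩ := coef s e h
      have : e = 1 := by linarith
      rw [w2, this, one_mul]
    have hβ : 0 ≤ β := by
      by_contra hβ
      push Not at hβ
      have h3 := hk0 (-β⁻¹) (by rw [neg_nonneg]; exact (inv_lt_zero.2 hβ).le)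
      rw [hks _ (by rw [neg_nonneg]; exact (inv_lt_zero.2 hβ).le), neg_mul,
        inv_mul_cancel₀ hβ.ne] at h3
      linarith
    rcases hβ.eq_or_lt with rfl | hβ
    · rw [hks s hs]; ring
    exfalso
    -- The end `b = β a₁ + a₂` is a boundary vector, so all nonnegative combinations of `a₁`, `a₂`
    -- are. Then `E(T x, T (x + s z₂ + s z₁))` grows quadratically in `s`, as `s k(s)` does, while
    -- `E(x, x + s z₂ + s z₁)` grows at most linearly.
    have hbe' : b = β • a₁ + a₂ := by rw [hbe]; module
    obtain ⟨f, hf⟩ := hC.exists_supp hbd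
    have fa1 := hf.nonneg hC h₁.mem
    have fa2 := hf.nonneg hC h₂.mem
    have hfb := hf.2
    rw [hbe'] at hfb
    simp only [map_add, map_smul, smul_eq_mul] at hfb
    have f1 : f a₁ = 0 := by nlinarith
    have f2 : f a₂ = 0 := by nlinarith
    have hzz : z₁ + z₂ ∈ closure C := hC.cl_add hz₁.mem hz₂.mem
    have growth : ∀ s : ℝ, 0 < s → s * s * (β * gau C a₁ y) ≤ 1 + s * gau C (z₁ + z₂) x := by
      intro s hs
      obtain ⟨c, hc, h3⟩ := hsec s s hs.le hs.le
      obtain ⟨w, hw⟩ : ∃ w, w = s • a₂ + (s * k s) • a₁ := ⟨_, rfl⟩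
      have hks0 := hk0 s hs.le
      have hwK : w ∈ closure C := hw ▸ hC.cl_add (hC.cl_smul hs.le h₂.mem)
        (hC.cl_smul (by positivity) h₁.mem)
      have hwC : w ∉ C := hf.notMem (by rw [hw]; simp [f1, f2])
      have hyw : y + s • a₂ + (s * k s) • a₁ = y + w := by rw [hw]; abel
      have hxz : x + s • z₂ + s • z₁ = x + s • (z₁ + z₂) := by module
      rw [hyw, hxz] at h3
      have hX := hC.add_smul_mem hx hzz hs.le
      have hE := hT.iso hx hX
      rw [h3, hC.hilE_smul_right hy (hC.add_mem' hy hwK) hc] at hE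
      have hup : hilE C x (x + s • (z₁ + z₂)) ≤ 1 + s * gau C (z₁ + z₂) x := by
        unfold hilE
        rw [hC.gau_add_smul_self hx hzz hs.le]
        have : gau C x (x + s • (z₁ + z₂)) ≤ 1 := by
          rw [hC.gau_le_iff (subset_closure hx) hX]
          simpa using hC.cl_smul hs.le hzz
        have h0 := gau_nonneg C (z₁ + z₂) x
        calc _ ≤ 1 * (1 + s * gau C (z₁ + z₂) x) := by gcongr
          _ = _ := one_mul _
      have hlow : s * s * (β * gau C a₁ y) ≤ hilE C y (y + w) := by
        unfold hilE
        rw [hC.gau_self_add hy hwK hwC, hC.gau_add_self hy hwK, one_mul]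
        have : gau C ((s * s * β) • a₁) y ≤ gau C w y := by
          rw [hC.gau_le_iff (hC.cl_smul (by positivity) h₁.mem) hy]
          have h4 := hC.gau_mem hwK hy
          have h5 := hC.cl_add h4 (hC.cl_add (hC.cl_smul hs.le h₂.mem) (hC.cl_smul hs.le h₁.mem))
          convert h5 using 1
          nth_rewrite 3 [hw]
          rw [hks s hs.le]
          module
        rw [hC.gau_smul_left h₁.mem hy (by positivity)] at this
        linarith
      linarith
    have hA : 0 < β * gau C a₁ y := mul_pos hβ (hC.gau_pos h₁.mem h₁.ne hy)
    have hB := gau_nonneg C (z₁ + z₂) x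
    set A := β * gau C a₁ y
    set B := gau C (z₁ + z₂) x
    have hs' : 0 < (B + 1) / A + 1 := by positivity
    have h3 := growth _ hs'
    have h4 : ((B + 1) / A + 1) * A = B + 1 + A := by field_simp
    have h5 : 0 ≤ (B + 1) / A := by positivity
    have h6 : ((B + 1) / A + 1) * ((B + 1) / A + 1) * A = ((B + 1) / A + 1) * (B + 1 + A) := by
      rw [mul_assoc, h4]
    rw [h6] at h3
    nlinarith

/-- The symmetric consequence of `plane_aux`: rays in direction `z₂` issuing from points of a ray
in a focusing direction have proportional ends. -/
theorem plane_aux' (hC : IsPCone C ℓ) {T : V → V} (hT : IsIso C T) {z₁ z₂ : V}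
    (hz₁ : IsExt C z₁) (hz₂ : IsExt C z₂) (hF : Foc C T z₁)
    (hn : ¬ ∃ c : ℝ, 0 < c ∧ z₁ = c • z₂) {x a₁ a₂ : V} (hx : x ∈ C)
    (h₁ : IsRay C T z₁ x a₁) (h₂ : IsRay C T z₂ x a₂) {t d : ℝ} (ht : 0 ≤ t) (hd : 0 < d)
    (htd : T (x + t • z₁) = d • (T x + t • a₁)) : IsRay C T z₂ (x + t • z₁) (d • a₂) := by
  refine ⟨h₂.toIsBd.smul hC hd, fun s hs => ?_⟩
  obtain ⟨c, hc, hT2⟩ := h₂.ray s hs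
  obtain ⟨c', hc', h3⟩ := (plane_aux hC hT hz₁ hz₂ hF hn hx h₁ h₂ hs hc hT2).ray t ht
  refine ⟨c' * c / d, by positivity, ?_⟩
  have : x + t • z₁ + s • z₂ = x + s • z₂ + t • z₁ := by abel
  rw [this, h3, hT2, htd]
  match_scalars <;> field_simp

/-- Focusing propagates from `z₁` to every extreme direction `z₂` with a supporting functional
that is positive at `z₁`. -/
theorem foc_propagate (hC : IsPCone C ℓ) {T : V → V} (hT : IsIso C T) {z₁ z₂ : V}
    (hz₁ : IsExt C z₁) (hz₂ : IsExt C z₂) (hF : Foc C T z₁) {f₀ : V →L[ℝ] ℝ}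
    (hf₀ : Supp C z₂ f₀) (hpos : 0 < f₀ z₁) : Foc C T z₂ := by
  have hn : ¬ ∃ c : ℝ, 0 < c ∧ z₁ = c • z₂ := by
    rintro ⟨c, hc, rfl⟩
    simp [hf₀.2] at hpos
  by_contra hnF
  refine hnF (foc_of_smooth hC hT hz₂ (smooth_of hC hf₀ fun f hf => ⟨f z₁ / f₀ z₁,
    fun x hx => ?_⟩))
  obtain ⟨a₁, h₁⟩ := exists_ray hC hT hz₁ hx
  obtain ⟨a₂, h₂⟩ := exists_ray hC hT hz₂ hx
  obtain ⟨d, hd, hTd⟩ := h₁.ray 1 zero_le_one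
  have hx1 := hC.add_smul_mem hx hz₁.mem zero_le_one
  have h3 := plane_aux' hC hT hz₁ hz₂ hF hn hx h₁ h₂ zero_le_one hd hTd
  obtain ⟨c, hc, hfl⟩ := flat_of_prop hC hT hz₂.toIsBd hx hx1 h₂ h3
    (flat_of_not_foc hC hT hz₂ hnF hx hx1 h₂) (prop_symm ⟨d, hd, rfl⟩)
  have e1 := hfl f hf
  have e2 := hfl f₀ hf₀
  simp only [map_add, map_smul, smul_eq_mul, one_mul] at e1 e2
  have h4 : c * (f z₁ * f₀ x) = c * (f₀ z₁ * f x) := by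
    linear_combination (-(f₀ x)) * e1 + f x * e2
  have h5 := mul_left_cancel₀ hc.ne' h4
  rw [div_mul_eq_mul_div, h5]
  field_simp

/-! ### Exposed directions span the space -/

/-- `z` spans an exposed ray of the closed cone. -/
structure IsExp (C : Set V) (z : V) : Prop extends IsExt C z where
  exposed : ∃ f, Supp C z f ∧ ∀ v ∈ closure C, f v = 0 → ∃ k : ℝ, 0 ≤ k ∧ v = k • z

/-- The point of the slice `ℓ = 1` of the closed cone farthest from a given point `c` is
exposed. -/
theorem IsPCone.exists_far [FiniteDimensional ℝ V] (hC : IsPCone C ℓ)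
    (hdim : 1 < Module.finrank ℝ V) (c : V) :
    ∃ z, IsExp C z ∧ ℓ z = 1 ∧ ∀ v ∈ closure C, ℓ v = 1 → ‖v - c‖ ≤ ‖z - c‖ := by
  obtain ⟨R, hR⟩ := hC.cl_bdd
  set B := {v : V | v ∈ closure C ∧ ℓ v = 1} with hB
  have hBcl : IsClosed B := isClosed_closure.inter (isClosed_eq ℓ.continuous continuous_const)
  have hBbd : Bornology.IsBounded B := by
    refine (Metric.isBounded_closedBall (x := (0 : V)) (r := R)).subset fun v hv => ?_
    have := hR v hv.1
    rw [hv.2, mul_one] at this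
    simpa using this
  have hBc : IsCompact B := Metric.isCompact_of_isClosed_isBounded hBcl hBbd
  obtain ⟨y, hy⟩ := hC.nonempty
  have hly := hC.pos hy
  have hBne : B.Nonempty := ⟨(ℓ y)⁻¹ • y, hC.cl_smul (inv_pos.2 hly).le (subset_closure hy), by
    simp [hly.ne']⟩
  obtain ⟨z, hz, hmax⟩ := hBc.exists_isMaxOn hBne
    (f := fun v => ‖v - c‖) (by fun_prop)
  have hfar : ∀ v ∈ closure C, ℓ v = 1 → ‖v - c‖ ≤ ‖z - c‖ := fun v hv hl => hmax ⟨hv, hl⟩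
  obtain ⟨f, hf⟩ : ∃ f : V →L[ℝ] ℝ, f = inner ℝ (z - c) z • ℓ - innerSL ℝ (z - c) := ⟨_, rfl⟩
  have hfv : ∀ v, f v = inner ℝ (z - c) z * ℓ v - inner ℝ (z - c) v := by
    intro v; rw [hf]; simp [inner_sub_left]
  have key : ∀ v ∈ closure C, ℓ v = 1 → ‖v - z‖ ^ 2 / 2 ≤ f v := by
    intro v hv hl
    have h1 : ‖v - c‖ ^ 2 ≤ ‖z - c‖ ^ 2 := by gcongr; exact hfar v hv hl
    have h2 : v - c = (v - z) + (z - c) := by abel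
    rw [h2, norm_add_sq_real] at h1
    rw [hfv, hl, mul_one]
    rw [real_inner_comm, inner_sub_right] at h1
    linarith
  have hscale : ∀ v ∈ closure C, v ≠ 0 → (ℓ v) * (‖(ℓ v)⁻¹ • v - z‖ ^ 2 / 2) ≤ f v := by
    intro v hv h0
    have hl := hC.l_pos hv h0
    have := key ((ℓ v)⁻¹ • v) (hC.cl_smul (inv_pos.2 hl).le hv) (by simp [hl.ne'])
    calc _ ≤ ℓ v * f ((ℓ v)⁻¹ • v) := by gcongr
      _ = f v := by rw [map_smul, smul_eq_mul]; field_simp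
  have hnn : ∀ v ∈ closure C, 0 ≤ f v := by
    intro v hv
    by_cases h0 : v = 0
    · simp [h0]
    · have hl := hC.l_pos hv h0
      exact le_trans (by positivity) (hscale v hv h0)
  have hexp : ∀ v ∈ closure C, f v = 0 → ∃ k : ℝ, 0 ≤ k ∧ v = k • z := by
    intro v hv h
    by_cases h0 : v = 0
    · exact ⟨0, le_rfl, by simp [h0]⟩
    have hl := hC.l_pos hv h0
    have h1 := hscale v hv h0
    rw [h] at h1
    have h2 : ‖(ℓ v)⁻¹ • v - z‖ ^ 2 / 2 ≤ 0 := by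
      by_contra hcon
      push Not at hcon
      nlinarith [mul_pos hl hcon]
    have h3 : ‖(ℓ v)⁻¹ • v - z‖ = 0 := by
      have : ‖(ℓ v)⁻¹ • v - z‖ ^ 2 = 0 := le_antisymm (by linarith) (by positivity)
      exact pow_eq_zero_iff two_ne_zero |>.1 this
    rw [norm_eq_zero, sub_eq_zero] at h3
    exact ⟨ℓ v, hl.le, by rw [← h3, smul_smul, mul_inv_cancel₀ hl.ne', one_smul]⟩
  have hpos : ∀ v ∈ C, 0 < f v := by
    intro v hv
    refine lt_of_le_of_ne (hnn v (subset_closure hv)) fun h => ?_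
    -- otherwise `f` vanishes on `C`, so that `C` lies on a line
    have hspan : ∀ w : V, w ∈ Submodule.span ℝ {z} := by
      intro w
      have hw0 : ∀ w : V, f w ≤ 0 := by
        intro w
        obtain ⟨m, -, hm⟩ := hC.exists_mem hv w
        have := hnn _ (subset_closure hm)
        simp only [map_sub, map_smul, smul_eq_mul, ← h] at this
        linarith
      have hf0 : ∀ w ∈ closure C, ∃ k : ℝ, 0 ≤ k ∧ w = k • z := fun w hw =>
        hexp w hw (le_antisymm (hw0 w) (hnn w hw))
      obtain ⟨m, -, hm⟩ := hC.exists_mem hv w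
      obtain ⟨k, -, hk⟩ := hf0 _ (subset_closure hm)
      obtain ⟨k', -, hk'⟩ := hf0 _ (subset_closure hv)
      refine Submodule.mem_span_singleton.2 ⟨m * k' - k, ?_⟩
      have : w = m • v - (m • v - w) := by abel
      rw [this, hk, hk']
      module
    have h1 : Module.finrank ℝ V ≤ 1 := by
      have h2 := finrank_span_le_card (R := ℝ) ({z} : Set V)
      have h3 : Submodule.span ℝ {z} = ⊤ := eq_top_iff.2 fun w _ => hspan w
      rw [h3, finrank_top] at h2
      simpa using h2
    omega
  have hfz : f z = 0 := by rw [hfv, hz.2]; ring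
  have hsup : Supp C z f := ⟨hpos, hfz⟩
  refine ⟨z, ⟨⟨⟨hz.1, hsup.notMem hfz, ?_⟩, ?_⟩, f, hsup, hexp⟩, hz.2, hfar⟩
  · rintro rfl
    have := hz.2
    simp at this
  · intro v hv hv'
    have h1 := hnn v hv
    have h2 := hnn _ hv'
    rw [map_sub, hfz] at h2
    exact hexp v hv (by linarith)

theorem IsPCone.exists_isExp [FiniteDimensional ℝ V] (hC : IsPCone C ℓ)
    (hdim : 1 < Module.finrank ℝ V) : ∃ z, IsExp C z := by
  obtain ⟨z, hz, -⟩ := hC.exists_far hdim 0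
  exact ⟨z, hz⟩

/-- The exposed directions span: otherwise they are orthogonal to some `μ`, and the point of the
slice farthest from `w - r μ`, with `r` large and `w` on the positive side of `μ`, is exposed by
`IsPCone.exists_far` but cannot be orthogonal to `μ`. -/
theorem IsPCone.span_isExp [FiniteDimensional ℝ V] (hC : IsPCone C ℓ)
    (hdim : 1 < Module.finrank ℝ V) : Submodule.span ℝ {z | IsExp C z} = ⊤ := by
  by_contra hne
  have hne' : (Submodule.span ℝ {z | IsExp C z})ᗮ ≠ ⊥ := fun h =>
    hne ((Submodule.orthogonal_eq_bot_iff).1 h)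
  obtain ⟨ν, hν, hν0⟩ := Submodule.exists_mem_ne_zero_of_ne_bot hne'
  have hperp : ∀ z, IsExp C z → inner ℝ z ν = 0 := fun z hz =>
    (Submodule.mem_orthogonal _ _).1 hν z (Submodule.subset_span hz)
  obtain ⟨w₀, hw₀, hw0⟩ : ∃ w ∈ C, inner ℝ w ν ≠ 0 := by
    by_contra hcon
    push Not at hcon
    have : innerSL ℝ ν = 0 := hC.clm_ext fun x hx => by
      simpa [real_inner_comm] using hcon x hx
    have h2 := congrArg (fun g => g ν) this
    simp at h2
    exact hν0 h2
  -- orient `ν` so that it is positive at a point `w` of the slice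
  obtain ⟨μ, w, hwC, hlw, hpos, hperp'⟩ : ∃ μ w : V, w ∈ C ∧ ℓ w = 1 ∧ 0 < inner ℝ w μ ∧
      ∀ z, IsExp C z → inner ℝ z μ = 0 := by
    have hl := hC.pos hw₀
    rcases lt_or_gt_of_ne hw0 with h | h
    · refine ⟨-ν, (ℓ w₀)⁻¹ • w₀, hC.smul (inv_pos.2 hl) hw₀, by simp [hl.ne'], ?_, fun z hz => ?_⟩
      · rw [inner_neg_right, real_inner_smul_left]
        have := mul_neg_of_pos_of_neg (inv_pos.2 hl) h
        linarith
      · rw [inner_neg_right, hperp z hz, neg_zero]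
    · refine ⟨ν, (ℓ w₀)⁻¹ • w₀, hC.smul (inv_pos.2 hl) hw₀, by simp [hl.ne'], ?_, hperp⟩
      rw [real_inner_smul_left]
      exact mul_pos (inv_pos.2 hl) h
  obtain ⟨R, hR⟩ := hC.cl_bdd
  have hR' : ∀ v ∈ closure C, ℓ v = 1 → ‖v‖ ≤ R := fun v hv hl => by
    have := hR v hv; rwa [hl, mul_one] at this
  set r := (4 * R ^ 2 + 1) / (2 * inner ℝ w μ) with hr
  obtain ⟨z, hz, hlz, hfar⟩ := hC.exists_far hdim (w - r • μ)
  have h1 : ‖w - (w - r • μ)‖ ^ 2 ≤ ‖z - (w - r • μ)‖ ^ 2 := by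
    gcongr; exact hfar w (subset_closure hwC) hlw
  have h2 : w - (w - r • μ) = r • μ := by abel
  have h3 : z - (w - r • μ) = (z - w) + r • μ := by abel
  rw [h2, h3, norm_add_sq_real, real_inner_smul_right, inner_sub_left, hperp' z hz] at h1
  have h4 : ‖z - w‖ ≤ 2 * R := by
    have := norm_sub_le z w
    linarith [hR' z hz.mem hlz, hR' w (subset_closure hwC) hlw]
  have h5 : ‖z - w‖ ^ 2 ≤ (2 * R) ^ 2 := by gcongr
  have h6 : r * (2 * inner ℝ w μ) = 4 * R ^ 2 + 1 := by rw [hr]; field_simp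
  nlinarith

/-! ### A focusing direction forces projectivity -/

/-- `T` agrees on `C`, up to positive scalars, with an invertible linear map. -/
def IsProj (C : Set V) (T : V → V) : Prop :=
  ∃ L : V ≃ₗ[ℝ] V, ∀ x ∈ C, ∃ c : ℝ, 0 < c ∧ T x = c • L x

theorem IsProj.comp_self {T : V → V} (hT : IsIso C T) (h : IsProj C T) : IsProj C (T ∘ T) := by
  obtain ⟨L, hL⟩ := h
  refine ⟨L.trans L, fun x hx => ?_⟩
  obtain ⟨c, hc, h1⟩ := hL x hx
  obtain ⟨d, hd, h2⟩ := hL _ (hT.maps hx)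
  refine ⟨d * c, by positivity, ?_⟩
  rw [Function.comp_apply, h2]
  nth_rewrite 1 [h1]
  simp [smul_smul]

theorem IsProj.inv {T S : V → V} (h : IsProj C S)
    (hTS : ∀ x ∈ C, S (T x) = x) (hT : IsIso C T) : IsProj C T := by
  obtain ⟨L, hL⟩ := h
  refine ⟨L.symm, fun x hx => ?_⟩
  obtain ⟨c, hc, h1⟩ := hL _ (hT.maps hx)
  rw [hTS x hx] at h1
  refine ⟨c⁻¹, inv_pos.2 hc, ?_⟩
  nth_rewrite 2 [h1]
  rw [map_smul, L.symm_apply_apply, smul_smul, inv_mul_cancel₀ hc.ne', one_smul]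

theorem IsRay.smul_dir (hC : IsPCone C ℓ) {T : V → V} {z x a : V} (h : IsRay C T z x a) {c : ℝ}
    (hc : 0 < c) : IsRay C T (c • z) x (c • a) := by
  refine ⟨h.toIsBd.smul hC hc, fun s hs => ?_⟩
  obtain ⟨d, hd, h1⟩ := h.ray (s * c) (by positivity)
  exact ⟨d, hd, by rw [smul_smul, smul_smul, h1]⟩

/-- A focusing extreme direction makes every exposed direction focusing, because the functional
exposing `e` is positive on all other boundary directions. -/
theorem Foc.isExp (hC : IsPCone C ℓ) {T : V → V} (hT : IsIso C T) {z e : V} (hz : IsExt C z)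
    (hF : Foc C T z) (he : IsExp C e) : Foc C T e := by
  obtain ⟨f, hf, hfe⟩ := he.exposed
  rcases (hf.nonneg hC hz.mem).eq_or_lt with h | h
  · obtain ⟨k, hk, hke⟩ := hfe z hz.mem h.symm
    have hk0 : 0 < k := lt_of_le_of_ne hk fun h0 => hz.ne (by rw [hke, ← h0, zero_smul])
    obtain ⟨a, ha, hall⟩ := hF
    refine ⟨a, ha, fun x hx => ?_⟩
    obtain ⟨l, hl, hr⟩ := hall x hx
    have := hr.smul_dir hC (inv_pos.2 hk0)
    rw [hke, smul_smul, inv_mul_cancel₀ hk0.ne', one_smul, smul_smul] at this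
    exact ⟨k⁻¹ * l, by positivity, this⟩
  · exact foc_propagate hC hT hz he.toIsExt hF hf h

/-- A function on `C` invariant under translations by nonnegative multiples of the members of a
basis contained in the closed cone is constant. -/
theorem IsPCone.const_of_move (hC : IsPCone C ℓ) {ι W : Type*} [Fintype ι]
    (b : Module.Basis ι ℝ V) (hb : ∀ i, b i ∈ closure C) (F : V → W)
    (hF : ∀ x ∈ C, ∀ s : ℝ, 0 ≤ s → ∀ i, F (x + s • b i) = F x) {x x' : V} (hx : x ∈ C)
    (hx' : x' ∈ C) : F x = F x' := by
  have key : ∀ x ∈ C, ∀ u : ι → ℝ, (∀ i, 0 ≤ u i) → ∀ S : Finset ι,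
      x + ∑ i ∈ S, u i • b i ∈ C ∧ F (x + ∑ i ∈ S, u i • b i) = F x := by
    intro x hx u hu S
    induction S using Finset.induction_on with
    | empty => simpa using hx
    | insert i S hi ih =>
      rw [Finset.sum_insert hi, add_comm (u i • b i), ← add_assoc]
      exact ⟨hC.add_smul_mem ih.1 (hb i) (hu i), by rw [hF _ ih.1 _ (hu i), ih.2]⟩
  have h1 := key x hx (fun i => max (b.repr (x' - x) i) 0) (fun i => le_max_right _ _) Finset.univ
  have h2 := key x' hx' (fun i => max (-(b.repr (x' - x) i)) 0) (fun i => le_max_right _ _)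
    Finset.univ
  rw [← h1.2, ← h2.2]
  congr 1
  have h3 : x' - x = ∑ i, (max (b.repr (x' - x) i) 0 - max (-(b.repr (x' - x) i)) 0) • b i := by
    conv_lhs => rw [← b.sum_repr (x' - x)]
    refine Finset.sum_congr rfl fun i _ => ?_
    congr 1
    rcases le_total 0 (b.repr (x' - x) i) with h | h
    · rw [max_eq_left h, max_eq_right (by linarith)]; ring
    · rw [max_eq_right h, max_eq_left (by linarith)]; ring
  simp only [sub_smul, Finset.sum_sub_distrib] at h3
  rw [← sub_eq_zero] at h3 ⊢
  rw [← neg_eq_zero, ← h3]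
  abel

/-- A single focusing extreme direction makes `T` projective. There is a basis `b` of exposed, hence
focusing, directions. By `plane_aux` the translation along `b j` changes all factors `κ i` by the
same scalar, so the ratios `κ i / κ i₀` are constant; with `L` sending `b i` to
`(κ i / κ i₀) a i`, the function `(κ i₀)⁻¹ T - L` is invariant under translations along the basis,
hence constant, and it vanishes by homogeneity. -/
theorem proj_of_foc [FiniteDimensional ℝ V] (hC : IsPCone C ℓ)
    (hdim : 1 < Module.finrank ℝ V) {T : V → V} (hT : IsIso C T) {z : V} (hz : IsExt C z)
    (hF : Foc C T z) : IsProj C T := by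
  obtain ⟨ι, _, b, hbE⟩ : ∃ (ι : Type _) (_ : Fintype ι) (b : Module.Basis ι ℝ V),
      ∀ i, IsExp C (b i) := by
    let b := Module.Basis.ofSpan (hC.span_isExp hdim).ge
    have := FiniteDimensional.fintypeBasisIndex b
    exact ⟨_, inferInstance, b, fun i =>
      Module.Basis.ofSpan_subset (hC.span_isExp hdim).ge ⟨i, rfl⟩⟩
  have hbF : ∀ i, Foc C T (b i) := fun i => hF.isExp hC hT hz (hbE i)
  choose a ha hray using hbF
  choose! κ hκ0 hκ using hray
  have hnt : Nontrivial V := Module.nontrivial_of_finrank_pos (R := ℝ) (M := V) (by omega)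
  obtain ⟨i₀⟩ : Nonempty ι := b.index_nonempty
  have huniq : ∀ i x (k : ℝ), x ∈ C → IsRay C T (b i) x (k • a i) → k = κ i x := by
    intro i x k hx h
    have h1 := h.unique hC hT hx (hκ i x hx)
    have : (k - κ i x) • a i = 0 := by rw [sub_smul, h1, sub_self]
    exact sub_eq_zero.1 ((smul_eq_zero.1 this).resolve_right (ha i).ne)
  -- effect of a translation along `b j`
  have hmove : ∀ x ∈ C, ∀ s : ℝ, 0 ≤ s → ∀ j, ∃ c : ℝ, 0 < c ∧
      T (x + s • b j) = c • (T x + s • κ j x • a j) ∧ ∀ i, κ i (x + s • b j) = c * κ i x := by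
    intro x hx s hs j
    obtain ⟨c, hc, h⟩ := (hκ j x hx).ray s hs
    refine ⟨c, hc, h, fun i => (huniq i _ _ (hC.add_smul_mem hx (hbE j).mem hs) ?_).symm⟩
    rw [← smul_smul]
    by_cases hij : i = j
    · subst hij
      exact (hκ i x hx).shift hC hs hc h
    · refine plane_aux hC hT (hbE i).toIsExt (hbE j).toIsExt ⟨a i, ha i, fun x hx =>
        ⟨_, hκ0 i x hx, hκ i x hx⟩⟩ ?_ hx (hκ i x hx) (hκ j x hx) hs hc h
      rintro ⟨k, hk, hkb⟩
      have h1 := congrArg (fun v => b.repr v i) hkb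
      simp [Ne.symm hij] at h1
  obtain ⟨x₀, hx₀⟩ := hC.nonempty
  have hρ : ∀ i, ∀ x ∈ C, κ i x / κ i₀ x = κ i x₀ / κ i₀ x₀ := by
    intro i x hx
    refine hC.const_of_move b (fun i => (hbE i).mem) (fun x => κ i x / κ i₀ x) ?_ hx hx₀
    intro x hx s hs j
    obtain ⟨c, hc, -, h⟩ := hmove x hx s hs j
    simp only [h]
    rw [mul_div_mul_left _ _ hc.ne']
  let L : V →ₗ[ℝ] V := b.constr ℝ fun i => (κ i x₀ / κ i₀ x₀) • a i
  have hLb : ∀ i, L (b i) = (κ i x₀ / κ i₀ x₀) • a i := fun i => b.constr_basis ℝ _ i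
  have hconst : ∀ x ∈ C, ∀ x' ∈ C,
      (κ i₀ x)⁻¹ • T x - L x = (κ i₀ x')⁻¹ • T x' - L x' := by
    intro x hx x' hx'
    refine hC.const_of_move b (fun i => (hbE i).mem) (fun x => (κ i₀ x)⁻¹ • T x - L x) ?_ hx hx'
    intro x hx s hs j
    obtain ⟨c, hc, h1, h2⟩ := hmove x hx s hs j
    have h3 := hκ0 i₀ x hx
    simp only [h1, h2, map_add, map_smul, hLb, ← hρ j x hx]
    match_scalars <;> field_simp <;> ring
  have hTL : ∀ x ∈ C, T x = κ i₀ x • L x := by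
    intro x hx
    have h1 := hconst x hx _ (hC.smul two_pos hx)
    have h2 : κ i₀ ((2 : ℝ) • x) = κ i₀ x :=
      (huniq i₀ _ _ (hC.smul two_pos hx)
        ((hκ i₀ x hx).smul_point hC hT (hbE i₀).mem hx two_pos)).symm
    rw [h2, hT.smul two_pos hx, map_smul] at h1
    have h3 : (κ i₀ x)⁻¹ • T x - L x = 0 := by
      rw [← sub_eq_zero] at h1
      rw [← neg_eq_zero, ← h1]
      module
    rw [← sub_eq_zero.1 h3, smul_smul, mul_inv_cancel₀ (hκ0 i₀ x hx).ne', one_smul]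
  have hsurj : Function.Surjective L := by
    have hCr : ∀ y ∈ C, y ∈ LinearMap.range L := by
      intro y hy
      obtain ⟨x, hx, rfl⟩ := hT.surj hy
      exact ⟨κ i₀ x • x, by rw [map_smul, hTL x hx]⟩
    intro v
    obtain ⟨m, -, hm⟩ := hC.exists_mem hx₀ v
    have h1 := Submodule.sub_mem _ (Submodule.smul_mem _ m (hCr _ hx₀)) (hCr _ hm)
    rwa [sub_sub_cancel] at h1
  refine ⟨LinearEquiv.ofBijective L ⟨LinearMap.injective_iff_surjective.2 hsurj, hsurj⟩,
    fun x hx => ⟨κ i₀ x, hκ0 i₀ x hx, ?_⟩⟩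
  exact hTL x hx

/-! ### The square of an isometry is projective -/

theorem IsRay.hilE_point (hC : IsPCone C ℓ) {T : V → V} (hT : IsIso C T) {z x a q : V}
    (hz : z ∈ closure C) (hx : x ∈ C) (hq : q ∈ C) (h : IsRay C T z x a) {s : ℝ} (hs : 0 ≤ s) :
    hilE C (T q) (T x + s • a) = hilE C q (x + s • z) := by
  obtain ⟨c, hc, h1⟩ := h.ray s hs
  rw [← hT.iso hq (hC.add_smul_mem hx hz hs), h1,
    hC.hilE_smul_right (hT.maps hq) (hC.add_smul_mem (hT.maps hx) h.mem hs) hc]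

theorem IsPCone.mem_near (hC : IsPCone C ℓ) {v a b : V} (hv : v ∈ C) (ha : a ∈ closure C)
    (hb : b ∈ closure C) {ε : ℝ} (hε : 0 < ε) : a + b + ε • v ∈ C :=
  hC.cl_add_mem (hC.cl_add ha hb) (hC.smul hε hv)

theorem IsPCone.gau_near (hC : IsPCone C ℓ) {v a b : V} (hv : v ∈ C) (ha : a ∈ closure C)
    (hb : b ∈ closure C) {ε s : ℝ} (hε : 0 < ε) (hs : 0 ≤ s) :
    gau C (v + s • a) (a + b + ε • v) ≤ s + 1 / ε := by
  rw [hC.gau_le_iff (subset_closure (hC.add_smul_mem hv ha hs)) (hC.mem_near hv ha hb hε)]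
  have h : (s + 1 / ε) • (a + b + ε • v) - (v + s • a) =
      (1 / ε) • a + (s + 1 / ε) • b + (s * ε) • v := by
    match_scalars <;> field_simp <;> ring
  rw [h]
  exact hC.cl_add (hC.cl_add (hC.cl_smul (by positivity) ha) (hC.cl_smul (by positivity) hb))
    (hC.cl_smul (by positivity) (subset_closure hv))

/-- Smoothness at `a` makes the point `a + b + ε v`, with `b` in the supporting hyperplane of `a`,
small compared with `v + s a` for large `s`. -/
theorem IsPCone.near_gau (hC : IsPCone C ℓ) {v a b : V} (hv : v ∈ C) (ha : a ∈ closure C)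
    (hb : b ∈ closure C) (hs : Smooth C a) {f : V →L[ℝ] ℝ} (hf : Supp C a f) (hfb : f b = 0)
    {ε : ℝ} (hε : 0 < ε) :
    ∃ N : ℝ, ∀ s, N ≤ s → 0 ≤ s → gau C (a + b + ε • v) (v + s • a) ≤ 2 * ε := by
  obtain ⟨t, ht, h⟩ := hs.mem_tcone hC ha hf (v := ε • v - b) (by
    rw [map_sub, map_smul, hfb, smul_eq_mul, sub_zero]; exact mul_pos hε (hf.1 v hv))
  refine ⟨(t + 1) / (2 * ε), fun s hN hs0 => ?_⟩
  rw [hC.gau_le_iff (subset_closure (hC.mem_near hv ha hb hε)) (hC.add_smul_mem hv ha hs0)]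
  have h1 : t ≤ 2 * ε * s - 1 := by
    rw [div_le_iff₀ (by positivity)] at hN
    linarith
  convert subset_closure (tcone_mono hC ha h1 h) using 1
  module

theorem IsPCone.hilE_near (hC : IsPCone C ℓ) {v a b : V} (hv : v ∈ C) (ha : a ∈ closure C)
    (hb : b ∈ closure C) (hs : Smooth C a) {f : V →L[ℝ] ℝ} (hf : Supp C a f) (hfb : f b = 0)
    {ε : ℝ} (hε : 0 < ε) :
    ∃ N : ℝ, ∀ s, N ≤ s → 0 ≤ s → hilE C (a + b + ε • v) (v + s • a) ≤ 4 * ε * s := by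
  obtain ⟨N, hN⟩ := hC.near_gau hv ha hb hs hf hfb hε
  refine ⟨max N (1 / ε), fun s hs0 hs1 => ?_⟩
  have h1 := hN s ((le_max_left _ _).trans hs0) hs1
  have h2 := hC.gau_near hv ha hb hε hs1
  have h3 : 1 / ε ≤ s := (le_max_right _ _).trans hs0
  calc hilE C (a + b + ε • v) (v + s • a) ≤ (2 * ε) * (s + 1 / ε) :=
        mul_le_mul h1 h2 (gau_nonneg _ _ _) (by positivity)
    _ ≤ (2 * ε) * (s + s) := by gcongr
    _ = 4 * ε * s := by ring

theorem IsPCone.le_hilE (hC : IsPCone C ℓ) {v a p : V} (hv : v ∈ C) (ha : a ∈ closure C)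
    (hp : p ∈ C) {f : V →L[ℝ] ℝ} (hf : Supp C a f) {s : ℝ} (hs : 0 ≤ s) :
    s * gau C a p * f p ≤ hilE C p (v + s • a) * f v := by
  have hva := hC.add_smul_mem hv ha hs
  have h1 := hC.map_le hf.1 (subset_closure hp) hva
  rw [map_add, map_smul, hf.2, smul_zero, add_zero] at h1
  have h2 : s * gau C a p ≤ gau C (v + s • a) p := by
    rcases hs.eq_or_lt with rfl | hs'
    · rw [zero_mul]; exact gau_nonneg _ _ _
    rw [← hC.gau_smul_left ha hp hs', hC.gau_le_iff (hC.cl_smul hs ha) hp]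
    have := hC.cl_add (hC.gau_mem (subset_closure hva) hp) (subset_closure hv)
    convert this using 1
    abel
  calc s * gau C a p * f p ≤ gau C (v + s • a) p * (gau C p (v + s • a) * f v) :=
        mul_le_mul h2 h1 (hf.1 p hp).le (gau_nonneg _ _ _)
    _ = _ := by unfold hilE; ring

/-- A lower bound for the distance of `p` to the points of a ray, in terms of a functional `f`
supporting at its end and another positive functional `g`. -/
theorem IsPCone.le_hilE' (hC : IsPCone C ℓ) {v a p : V} (hv : v ∈ C) (ha : a ∈ closure C)
    (hp : p ∈ C) {f g : V →L[ℝ] ℝ} (hf : Supp C a f) (hg : ∀ x ∈ C, 0 < g x) {s : ℝ}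
    (hs : 0 ≤ s) : s * g a * f p ≤ hilE C p (v + s • a) * (f v * g p) := by
  have h1 := hC.le_hilE hv ha hp hf hs
  have h2 := hC.map_le hg ha hp
  have h3 := hf.1 p hp
  have h4 := hg p hp
  calc s * g a * f p ≤ s * (gau C a p * g p) * f p := by gcongr
    _ = s * gau C a p * f p * g p := by ring
    _ ≤ hilE C p (v + s • a) * f v * g p := by gcongr
    _ = _ := by ring

/-- A bound for `M(a + b + ε v, v + s d)`, uniform in `ε ≤ 1`, `s ≥ 0` and `d`. -/
theorem IsPCone.exists_near_bound (hC : IsPCone C ℓ) {v a b : V} (hv : v ∈ C)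
    (ha : a ∈ closure C) (hb : b ∈ closure C) :
    ∃ c : ℝ, 0 < c ∧ ∀ ε : ℝ, 0 < ε → ε ≤ 1 → ∀ s : ℝ, 0 ≤ s → ∀ d ∈ closure C,
      gau C (a + b + ε • v) (v + s • d) ≤ c := by
  obtain ⟨c, hc, h⟩ := hC.exists_mem hv (a + b + v)
  refine ⟨c, hc, fun ε hε hε1 s hs d hd => ?_⟩
  rw [hC.gau_le_iff (subset_closure (hC.mem_near hv ha hb hε)) (hC.add_smul_mem hv hd hs)]
  have h1 := hC.cl_add (subset_closure h) (hC.cl_add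
    (hC.cl_smul (sub_nonneg.2 hε1) (subset_closure hv)) (hC.cl_smul (c := c * s) (by positivity) hd))
  convert h1 using 1
  module

/-- Let `a` be smooth and `e` in its supporting hyperplane. If the rays from `u` in the directions
`a` and `e` are carried to rays with ends `a₂` and `a₁`, then one of these ends lies in a given
supporting hyperplane of the other: otherwise, for small `ε`, the image of `a + e + ε u` would be too
close to both image rays. -/
theorem supp_of_rays (hC : IsPCone C ℓ) {S : V → V} (hS : IsIso C S) {u e a a₁ a₂ : V}
    (hu : u ∈ C) (he : e ∈ closure C) (ha : a ∈ closure C) (h₁ : IsRay C S e u a₁)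
    (h₂ : IsRay C S a u a₂) (hsa : Smooth C a) {f f₁ f₂ : V →L[ℝ] ℝ} (hf : Supp C a f)
    (hfe : f e = 0) (hf₁ : Supp C a₁ f₁) (hf₂ : Supp C a₂ f₂) : f₁ a₂ = 0 ∨ f₂ a₁ = 0 := by
  by_contra! hcon
  have hp₁ : 0 < f₁ a₂ := lt_of_le_of_ne (hf₁.nonneg hC h₂.mem) hcon.1.symm
  have hp₂ : 0 < f₂ a₁ := lt_of_le_of_ne (hf₂.nonneg hC h₁.mem) hcon.2.symm
  have hv := hS.maps hu
  have hv₁ := hf₁.1 _ hv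
  have hv₂ := hf₂.1 _ hv
  obtain ⟨c, hc, hcb⟩ := hC.exists_near_bound hu ha he
  set D := f₂ a₁ * f₁ a₂ with hD
  have hD0 : 0 < D := mul_pos hp₂ hp₁
  set F := f₁ (S u) * f₂ (S u) with hF
  have hF0 : 0 < F := mul_pos hv₁ hv₂
  obtain ⟨ε, hε, hε1, hεD⟩ : ∃ ε : ℝ, 0 < ε ∧ ε ≤ 1 ∧ 8 * c * ε * F < D := by
    refine ⟨min 1 (D / (16 * c * F)), lt_min one_pos (by positivity), min_le_left _ _, ?_⟩
    calc 8 * c * min 1 (D / (16 * c * F)) * F ≤ 8 * c * (D / (16 * c * F)) * F := by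
          gcongr; exact min_le_right _ _
      _ = D / 2 := by field_simp; norm_num
      _ < D := by linarith
  obtain ⟨N, hN⟩ := hC.hilE_near hu ha he hsa hf hfe hε
  set s := max N (max (1 / ε) 1) with hsdef
  have hs1 : 1 ≤ s := (le_max_right _ _).trans (le_max_right _ _)
  have hs0 : 0 ≤ s := by linarith
  have hsε : 1 / ε ≤ s := (le_max_left _ _).trans (le_max_right _ _)
  have hq := hC.mem_near hu ha he hε
  have hSq := hS.maps hq
  have e₂ := hN s (le_max_left _ _) hs0
  have e₁ : hilE C (a + e + ε • u) (u + s • e) ≤ c * (s + s) := by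
    have h3 := hC.gau_near hu he ha hε hs0
    rw [add_comm e a] at h3
    exact mul_le_mul (hcb ε hε hε1 s hs0 e he) (h3.trans (by gcongr)) (gau_nonneg _ _ _) hc.le
  have l₁ := hC.le_hilE' hv h₁.mem hSq hf₁ hf₂.1 hs0
  have l₂ := hC.le_hilE' hv h₂.mem hSq hf₂ hf₁.1 hs0
  rw [h₁.hilE_point hC hS he hu hq hs0] at l₁
  rw [h₂.hilE_point hC hS ha hu hq hs0] at l₂
  set P₁ := f₁ (S (a + e + ε • u)) with hP₁
  set P₂ := f₂ (S (a + e + ε • u)) with hP₂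
  have hP₁0 : 0 < P₁ := hf₁.1 _ hSq
  have hP₂0 : 0 < P₂ := hf₂.1 _ hSq
  have l₁' : s * f₂ a₁ * P₁ ≤ c * (s + s) * (f₁ (S u) * P₂) := l₁.trans (by gcongr)
  have l₂' : s * f₁ a₂ * P₂ ≤ 4 * ε * s * (f₂ (S u) * P₁) := l₂.trans (by gcongr)
  have h5 := mul_le_mul l₁' l₂' (by positivity) (by positivity)
  have h6 : (s * s * P₁ * P₂) * D ≤ (s * s * P₁ * P₂) * (8 * c * ε * F) := by
    rw [hD, hF]; linarith
  exact absurd (le_of_mul_le_mul_left h6 (by positivity)) (not_le.2 hεD)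

/-- If two rays with common origin, `a` smooth and `e` in its supporting hyperplane, are carried
to rays with smooth end directions, then `e` is itself smooth. -/
theorem smooth_of_rays (hC : IsPCone C ℓ) {S : V → V} (hS : IsIso C S) {u e a a₁ a₂ : V}
    (hu : u ∈ C) (he : IsBd C e) (ha : a ∈ closure C) (h₁ : IsRay C S e u a₁)
    (h₂ : IsRay C S a u a₂) (hsa : Smooth C a) (hs₁ : Smooth C a₁) (hs₂ : Smooth C a₂)
    {f f₁ f₂ : V →L[ℝ] ℝ} (hf : Supp C a f) (hfe : f e = 0) (hf₁ : Supp C a₁ f₁)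
    (hf₂ : Supp C a₂ f₂) : Smooth C e := by
  have hz : f₁ a₂ = 0 ∧ f₂ a₁ = 0 := by
    rcases supp_of_rays hC hS hu he.mem ha h₁ h₂ hsa hf hfe hf₁ hf₂ with h | h
    · obtain ⟨c, -, hc⟩ := hs₂ f₁ f₂ ⟨hf₁.1, h⟩ hf₂
      exact ⟨h, by rw [hc]; simp [hf₁.2]⟩
    · obtain ⟨c, -, hc⟩ := hs₁ f₂ f₁ ⟨hf₂.1, h⟩ hf₁
      exact ⟨by rw [hc]; simp [hf₂.2], h⟩
  -- every supporting functional of `e` also supports `a`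
  suffices h : ∀ g, Supp C e g → g a = 0 by
    intro g g' hg hg'
    exact hsa g g' ⟨hg.1, h g hg⟩ ⟨hg'.1, h g' hg'⟩
  intro g hg
  refine le_antisymm (le_of_forall_pos_le_add fun η hη => ?_) (hC.cl_nonneg hg.1 ha)
  rw [zero_add]
  have hv := hS.maps hu
  obtain ⟨c, hc, hcb⟩ := hC.exists_near_bound hv h₁.mem h₂.mem
  have hlu := hC.pos hu
  have hle := hC.l_pos he.mem he.ne
  have hgu := hg.1 u hu
  have hfu := hf.1 u hu
  set B := 4 * g u * (4 * c * ℓ u) with hB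
  have hB0 : 0 < B := by positivity
  obtain ⟨ε, hε, hε1, hεη⟩ : ∃ ε : ℝ, 0 < ε ∧ ε ≤ 1 ∧ ε * B ≤ η * ℓ e := by
    refine ⟨min 1 (η * ℓ e / B), lt_min one_pos (by positivity), min_le_left _ _, ?_⟩
    rw [← le_div_iff₀ hB0]
    exact min_le_right _ _
  have hp := hC.mem_near hv h₁.mem h₂.mem hε
  obtain ⟨x, hx, hSx⟩ := hS.surj hp
  obtain ⟨N₁, hN₁⟩ := hC.hilE_near hv h₁.mem h₂.mem hs₁ hf₁ hz.1 hε
  obtain ⟨N₂, hN₂⟩ := hC.hilE_near hv h₂.mem h₁.mem hs₂ hf₂ hz.2 hε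
  rw [add_comm a₂ a₁] at hN₂
  set s := max (max N₁ N₂) 1 with hsdef
  have hs1 : 1 ≤ s := le_max_right _ _
  have hs0 : 0 < s := by linarith
  have e₁ := hN₁ s ((le_max_left _ _).trans (le_max_left _ _)) hs0.le
  have e₂ := hN₂ s ((le_max_right _ _).trans (le_max_left _ _)) hs0.le
  rw [← hSx, h₁.hilE_point hC hS he.mem hu hx hs0.le] at e₁
  rw [← hSx, h₂.hilE_point hC hS ha hu hx hs0.le] at e₂
  have hgx := hg.1 x hx
  have hfx := hf.1 x hx
  have hlx := hC.pos hx
  have b₁ : ℓ e * g x ≤ 4 * ε * (g u * ℓ x) := by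
    have := hC.le_hilE' hu he.mem hx hg (fun _ h => hC.pos h) hs0.le
    have h3 : s * (ℓ e * g x) ≤ s * (4 * ε * (g u * ℓ x)) := by
      calc s * (ℓ e * g x) = s * ℓ e * g x := by ring
        _ ≤ 4 * ε * s * (g u * ℓ x) := this.trans (by gcongr)
        _ = _ := by ring
    exact le_of_mul_le_mul_left h3 hs0
  have b₂ : gau C a x * f x ≤ 4 * ε * f u := by
    have := hC.le_hilE hu ha hx hf hs0.le
    have h3 : s * (gau C a x * f x) ≤ s * (4 * ε * f u) := by
      calc s * (gau C a x * f x) = s * gau C a x * f x := by ring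
        _ ≤ 4 * ε * s * f u := this.trans (by gcongr)
        _ = _ := by ring
    exact le_of_mul_le_mul_left h3 hs0
  have b₃ : f u * ℓ x ≤ c * (1 / ε) * (ℓ u * f x) := by
    have h3 : hilE C x u ≤ c * (1 / ε) := by
      rw [← hS.iso hx hu, hSx]
      have h4 := hcb ε hε hε1 0 le_rfl _ h₁.mem
      have h5 := hC.gau_near hv h₁.mem h₂.mem hε le_rfl
      rw [zero_smul, add_zero] at h4 h5
      rw [zero_add] at h5
      exact mul_le_mul h4 h5 (gau_nonneg _ _ _) hc.le
    have h4 := hC.map_le (fun _ h => hC.pos h) (subset_closure hx) hu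
    have h5 := hC.map_le hf.1 (subset_closure hu) hx
    calc f u * ℓ x ≤ (gau C u x * f x) * (gau C x u * ℓ u) :=
          mul_le_mul h5 h4 hlx.le (mul_nonneg (gau_nonneg _ _ _) hfx.le)
      _ = hilE C x u * (ℓ u * f x) := by unfold hilE; ring
      _ ≤ _ := by gcongr
  have b₄ : gau C a x * ℓ x ≤ 4 * c * ℓ u := by
    have h3 : f x * (gau C a x * ℓ x) ≤ f x * (4 * c * ℓ u) := by
      calc f x * (gau C a x * ℓ x) = gau C a x * f x * ℓ x := by ring
        _ ≤ 4 * ε * f u * ℓ x := by gcongr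
        _ = 4 * ε * (f u * ℓ x) := by ring
        _ ≤ 4 * ε * (c * (1 / ε) * (ℓ u * f x)) := by gcongr
        _ = f x * (4 * c * ℓ u) := by field_simp
    exact le_of_mul_le_mul_left h3 hfx
  have b₅ := hC.map_le hg.1 ha hx
  have hM := gau_nonneg C a x
  have : g a * ℓ e ≤ η * ℓ e := by
    calc g a * ℓ e ≤ gau C a x * g x * ℓ e := by gcongr
      _ = gau C a x * (ℓ e * g x) := by ring
      _ ≤ gau C a x * (4 * ε * (g u * ℓ x)) := by gcongr
      _ = 4 * ε * g u * (gau C a x * ℓ x) := by ring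
      _ ≤ 4 * ε * g u * (4 * c * ℓ u) := by gcongr
      _ = ε * B := by rw [hB]; ring
      _ ≤ η * ℓ e := hεη
  exact le_of_mul_le_mul_right this hle

/-- The zero set of a supporting functional contains an extreme ray. -/
theorem IsPCone.exists_ext_face [FiniteDimensional ℝ V] (hC : IsPCone C ℓ) {a : V}
    (ha : IsBd C a) {f : V →L[ℝ] ℝ} (hf : Supp C a f) : ∃ e, IsExt C e ∧ f e = 0 := by
  obtain ⟨R, hR⟩ := hC.cl_bdd
  have hcpt : IsCompact {w : V | w ∈ closure C ∧ ℓ w = 1 ∧ f w = 0} := by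
    refine Metric.isCompact_of_isClosed_isBounded
      (isClosed_closure.inter ((isClosed_eq ℓ.continuous continuous_const).inter
        (isClosed_eq f.continuous continuous_const))) ?_
    refine (Metric.isBounded_closedBall (x := (0 : V)) (r := R)).subset fun w hw => ?_
    have := hR w hw.1
    rw [hw.2.1, mul_one] at this
    simpa using this
  have hla := hC.l_pos ha.mem ha.ne
  obtain ⟨e, hmem, hext⟩ := hcpt.extremePoints_nonempty
    ⟨(ℓ a)⁻¹ • a, hC.cl_smul (inv_pos.2 hla).le ha.mem, by simp [hla.ne'], by simp [hf.2]⟩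
  obtain ⟨hecl, hle, hfe⟩ := hmem
  refine ⟨e, ⟨⟨hecl, hf.notMem hfe, ?_⟩, fun v hv hev => ?_⟩, hfe⟩
  · rintro rfl
    simp at hle
  have hfv := hf.nonneg hC hv
  have hfev := hf.nonneg hC hev
  rw [map_sub, hfe] at hfev
  have hfv0 : f v = 0 := by linarith
  by_cases hv0 : v = 0
  · exact ⟨0, le_rfl, by simp [hv0]⟩
  by_cases hev0 : e - v = 0
  · exact ⟨1, zero_le_one, by rw [one_smul]; exact (sub_eq_zero.1 hev0).symm⟩
  have ht := hC.l_pos hv hv0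
  have ht' := hC.l_pos hev hev0
  have ht'' : ℓ (e - v) = 1 - ℓ v := by rw [map_sub, hle]
  rw [ht''] at ht'
  refine ⟨ℓ v, ht.le, ?_⟩
  have := hext (x₁ := (ℓ v)⁻¹ • v) (x₂ := (1 - ℓ v)⁻¹ • (e - v))
    ⟨hC.cl_smul (inv_pos.2 ht).le hv, by simp [ht.ne'], by simp [hfv0]⟩
    ⟨hC.cl_smul (inv_pos.2 ht').le hev, by rw [map_smul, ht'', smul_eq_mul, inv_mul_cancel₀ ht'.ne'],
      by simp [hfv0, hfe]⟩
    ⟨ℓ v, 1 - ℓ v, ht, ht', by ring, by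
      rw [smul_smul, smul_smul, mul_inv_cancel₀ ht.ne', mul_inv_cancel₀ ht'.ne']; module⟩
  rw [← this, smul_smul, mul_inv_cancel₀ ht.ne', one_smul]

/-- If neither `T`, its inverse nor `T ∘ T` had a focusing extreme ray, then
`smooth_of_rays` would produce a smooth, hence focusing, extreme ray for the inverse. -/
theorem isProj_sq [FiniteDimensional ℝ V] (hC : IsPCone C ℓ)
    (hdim : 1 < Module.finrank ℝ V) {T : V → V} (hT : IsIso C T) : IsProj C (T ∘ T) := by
  obtain ⟨S, hS, hST, hTS⟩ := hT.exists_inv hC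
  have hTT := hT.comp hT
  by_cases hFT : ∃ z, IsExt C z ∧ Foc C T z
  · obtain ⟨z, hz, hF⟩ := hFT
    exact (proj_of_foc hC hdim hT hz hF).comp_self hT
  by_cases hFS : ∃ z, IsExt C z ∧ Foc C S z
  · obtain ⟨z, hz, hF⟩ := hFS
    exact ((proj_of_foc hC hdim hS hz hF).inv hST hT).comp_self hT
  by_cases hFTT : ∃ z, IsExt C z ∧ Foc C (T ∘ T) z
  · obtain ⟨z, hz, hF⟩ := hFTT
    exact proj_of_foc hC hdim hTT hz hF
  exfalso
  push Not at hFT hFS hFTT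
  obtain ⟨z, hz'⟩ := hC.exists_isExp hdim
  have hz := hz'.toIsExt
  obtain ⟨x, hx⟩ := hC.nonempty
  obtain ⟨a₂, h₂⟩ := exists_ray hC hT hz hx
  obtain ⟨a, h⟩ := exists_ray hC hTT hz hx
  have hs₂ := smooth_of_not_foc hC hT hz (hFT z hz) hx h₂
  have hs := smooth_of_not_foc hC hTT hz (hFTT z hz) hx h
  have hu : T (T x) ∈ C := hTT.maps hx
  have hSray : IsRay C S a (T (T x)) a₂ := by
    refine ⟨h₂.toIsBd, fun s hs => ?_⟩
    obtain ⟨c, hc, hc'⟩ := h.ray s hs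
    obtain ⟨d, hd, hd'⟩ := h₂.ray s hs
    have hxz := hC.add_smul_mem hx hz.mem hs
    have h3 : S (T (T (x + s • z))) = T (x + s • z) := hST _ (hT.maps hxz)
    simp only [Function.comp_apply] at hc'
    rw [hc', hS.smul hc (hC.add_smul_mem hu h.mem hs), hd'] at h3
    refine ⟨c⁻¹ * d, by positivity, ?_⟩
    rw [hST _ (hT.maps hx), mul_smul, ← h3, smul_smul, inv_mul_cancel₀ hc.ne', one_smul]
  obtain ⟨f, hf⟩ := hC.exists_supp h.toIsBd
  obtain ⟨e, he, hfe⟩ := hC.exists_ext_face h.toIsBd hf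
  obtain ⟨a₁, h₁⟩ := exists_ray hC hS he hu
  have hs₁ := smooth_of_not_foc hC hS he (hFS e he) hu h₁
  obtain ⟨f₁, hf₁⟩ := hC.exists_supp h₁.toIsBd
  obtain ⟨f₂, hf₂⟩ := hC.exists_supp h₂.toIsBd
  exact hFS e he (foc_of_smooth hC hS he
    (smooth_of_rays hC hS hu he.toIsBd h.mem h₁ hSray hs hs₁ hs₂ hf hfe hf₁ hf₂))

end Body

section Body

/-! ### The cone over a convex domain -/

/-- Omission of the last coordinate. -/
def ini {n : ℕ} : Euc (n + 1) →L[ℝ] Euc n :=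
  LinearMap.toContinuousLinearMap
    { toFun := fun v => WithLp.toLp 2 fun i => v i.castSucc
      map_add' := fun _ _ => rfl
      map_smul' := fun _ _ => rfl }

/-- The last coordinate. -/
def lst {n : ℕ} : Euc (n + 1) →L[ℝ] ℝ := EuclideanSpace.proj (Fin.last n)

/-- The lift `(x, 1)` of `x` to the affine hyperplane where the last coordinate is `1`. -/
def hat {n : ℕ} (x : Euc n) : Euc (n + 1) :=
  WithLp.toLp 2 (Fin.snoc (fun i => x i) 1 : Fin (n + 1) → ℝ)

variable {n : ℕ}

theorem ini_apply (v : Euc (n + 1)) (i : Fin n) : ini v i = v i.castSucc := rfl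

theorem lst_apply (v : Euc (n + 1)) : lst v = v (Fin.last n) := rfl

theorem ini_hat (x : Euc n) : ini (hat x) = x := by
  ext i
  simp [ini_apply, hat]

theorem lst_hat (x : Euc n) : lst (hat x) = 1 := by
  simp [lst_apply, hat]

theorem ini_lst_ext {v w : Euc (n + 1)} (h : ini v = ini w) (h' : lst v = lst w) : v = w := by
  ext i
  refine Fin.lastCases h' (fun j => ?_) i
  exact congrArg (fun u : Euc n => u j) h

theorem hat_injective : Function.Injective (hat (n := n)) := fun x y h => by
  rw [← ini_hat x, h, ini_hat]

theorem eq_smul_hat {v : Euc (n + 1)} (h : 0 < lst v) : v = lst v • hat ((lst v)⁻¹ • ini v) := by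
  refine ini_lst_ext ?_ ?_
  · rw [map_smul, ini_hat, smul_smul, mul_inv_cancel₀ h.ne', one_smul]
  · rw [map_smul, lst_hat, smul_eq_mul, mul_one]

theorem norm_hat_le (x : Euc n) : ‖hat x‖ ≤ ‖x‖ + 1 := by
  have h : ‖hat x‖ ^ 2 = ‖x‖ ^ 2 + 1 := by
    rw [EuclideanSpace.norm_sq_eq, EuclideanSpace.norm_sq_eq, Fin.sum_univ_castSucc]
    simp [hat]
  refine abs_le_of_sq_le_sq' ?_ (by positivity) |>.2
  rw [h]
  nlinarith [norm_nonneg x]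

theorem continuous_hat : Continuous (hat (n := n)) := by
  refine (PiLp.continuous_toLp 2 _).comp (continuous_pi fun i => ?_)
  refine Fin.lastCases ?_ (fun j => ?_) i
  · simp only [Fin.snoc_last]; fun_prop
  · simp only [Fin.snoc_castSucc]; fun_prop

/-- The open cone spanned by the lift of `Ω`. -/
def coneOver (Ω : Set (Euc n)) : Set (Euc (n + 1)) :=
  {v | 0 < lst v ∧ (lst v)⁻¹ • ini v ∈ Ω}

variable {Ω : Set (Euc n)}

theorem hat_mem {x : Euc n} : hat x ∈ coneOver Ω ↔ x ∈ Ω := by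
  simp [coneOver, lst_hat, ini_hat]

theorem smul_mem_coneOver {c : ℝ} (hc : 0 < c) {v : Euc (n + 1)} (hv : v ∈ coneOver Ω) :
    c • v ∈ coneOver Ω := by
  have h := hv.1
  refine ⟨by rw [map_smul]; exact mul_pos hc h, ?_⟩
  convert hv.2 using 1
  rw [map_smul, map_smul, smul_smul, smul_eq_mul]
  congr 1
  field_simp

theorem continuousOn_proj :
    ContinuousOn (fun v : Euc (n + 1) => (lst v)⁻¹ • ini v) {v | 0 < lst v} := by
  refine ContinuousOn.smul (ContinuousOn.inv₀ lst.continuous.continuousOn fun v hv => ?_)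
    ini.continuous.continuousOn
  exact (show 0 < lst v from hv).ne'

theorem isPCone_coneOver (hne : Ω.Nonempty) (hop : IsOpen Ω) (hbd : Bornology.IsBounded Ω)
    (hcv : Convex ℝ Ω) : IsPCone (coneOver Ω) (lst (n := n)) where
  isOpen := continuousOn_proj.isOpen_inter_preimage
    (isOpen_lt continuous_const lst.continuous) hop
  add := by
    intro v w hv hw
    have h1 := hv.1
    have h2 := hw.1
    refine ⟨by rw [map_add]; positivity, ?_⟩
    have := hcv hv.2 hw.2 (a := lst v / (lst v + lst w)) (b := lst w / (lst v + lst w))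
      (by positivity) (by positivity) (by field_simp)
    convert this using 1
    rw [map_add, map_add]
    match_scalars <;> field_simp
  smul := fun hc h => smul_mem_coneOver hc h
  nonempty := by
    obtain ⟨x, hx⟩ := hne
    exact ⟨hat x, hat_mem.2 hx⟩
  pos h := h.1
  bdd := by
    obtain ⟨R, hR⟩ := hbd.exists_norm_le
    refine ⟨R + 1, fun v hv => ?_⟩
    have h1 := hv.1
    calc ‖v‖ = ‖lst v • hat ((lst v)⁻¹ • ini v)‖ := by rw [← eq_smul_hat h1]
      _ = lst v * ‖hat ((lst v)⁻¹ • ini v)‖ := by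
        rw [norm_smul, Real.norm_of_nonneg h1.le]
      _ ≤ lst v * (R + 1) := by
        gcongr
        exact (norm_hat_le _).trans (by linarith [hR _ hv.2])
      _ = _ := mul_comm _ _

/-! ### The Hilbert metric in terms of gauges -/

theorem dist_line_left (x y : Euc n) (r : ℝ) : dist (x + r • (y - x)) x = |r| * dist x y := by
  rw [dist_eq_norm, add_sub_cancel_left, norm_smul, Real.norm_eq_abs, dist_comm, dist_eq_norm]

theorem dist_line_right (x y : Euc n) (r : ℝ) :
    dist (x + r • (y - x)) y = |1 - r| * dist x y := by
  have h : x + r • (y - x) - y = (1 - r) • (x - y) := by module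
  rw [dist_eq_norm, h, norm_smul, Real.norm_eq_abs, dist_eq_norm]

/-- A boundary point beyond `x` on the line through `x` and `y` computes the gauge. -/
theorem gau_of_line (hC : IsPCone (coneOver Ω) (lst (n := n))) {x y : Euc n} (hx : x ∈ Ω)
    (hy : y ∈ Ω) {r : ℝ} (hr : r < 0) (hcl : x + r • (y - x) ∈ closure Ω)
    (hn : x + r • (y - x) ∉ Ω) : gau (coneOver Ω) (hat y) (hat x) = (1 - r) / (-r) := by
  have hr' : 0 < -r := by linarith
  have hr0 : r ≠ 0 := hr.ne
  have hhat : ((1 - r) / (-r)) • hat x - hat y = (-r)⁻¹ • hat (x + r • (y - x)) := by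
    refine ini_lst_ext ?_ ?_
    · simp only [map_sub, map_smul, ini_hat]
      match_scalars <;> field_simp <;> ring
    · simp only [map_sub, map_smul, lst_hat, smul_eq_mul]
      field_simp
      ring
  have hx' := hat_mem.2 hx
  refine le_antisymm ?_ (not_lt.1 fun hlt => ?_)
  · rw [hC.gau_le_iff (subset_closure (hat_mem.2 hy)) hx', hhat]
    exact hC.cl_smul (inv_pos.2 hr').le
      (map_mem_closure continuous_hat hcl fun z hz => hat_mem.2 hz)
  · have := ((hC.toIsOCone.gau_lt_iff hx').1 hlt).2
    rw [hhat] at this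
    have h2 := hC.smul hr' this
    rw [smul_smul, mul_inv_cancel₀ hr'.ne', one_smul] at h2
    exact hn (hat_mem.1 h2)

/-- The cross-ratio factor at the end `α` is a gauge, for the end of the line beyond `x`. -/
theorem ratio_eq_gau (hC : IsPCone (coneOver Ω) (lst (n := n))) (hop : IsOpen Ω)
    (hcv : Convex ℝ Ω) {x y α : Euc n} (hx : x ∈ Ω) (hy : y ∈ Ω) (hα : α ∈ frontier Ω)
    (hcol : Collinear ℝ ({α, x, y} : Set (Euc n))) (hd : dist α x < dist α y) :
    dist α y / dist α x = gau (coneOver Ω) (hat y) (hat x) := by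
  rw [hop.frontier_eq] at hα
  have hxy : x ≠ y := by rintro rfl; exact lt_irrefl _ hd
  obtain ⟨r, rfl⟩ : ∃ r : ℝ, α = x + r • (y - x) := by
    obtain ⟨v, hv⟩ := (collinear_iff_of_mem (p₀ := x) (by simp)).1 hcol
    obtain ⟨p, hp⟩ := hv α (by simp)
    obtain ⟨q, hq⟩ := hv y (by simp)
    have hq0 : q ≠ 0 := by
      rintro rfl
      exact hxy (by simpa using hq.symm)
    refine ⟨p / q, ?_⟩
    rw [hp, hq, vadd_eq_add, vadd_eq_add, add_sub_cancel_right, smul_smul, div_mul_cancel₀ _ hq0,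
      add_comm]
  have hdp : 0 < dist x y := dist_pos.2 hxy
  rw [dist_line_left, dist_line_right] at hd ⊢
  have hlt : |r| < |1 - r| := lt_of_mul_lt_mul_right hd hdp.le
  have hr1 : r < 1 / 2 := by
    have := sq_lt_sq.2 hlt
    nlinarith
  have hr : r < 0 := by
    by_contra! h0
    refine hα.2 ?_
    have := hcv hx hy (a := 1 - r) (b := r) (by linarith) h0 (by ring)
    convert this using 1
    module
  rw [gau_of_line hC hx hy hr hα.1 hα.2, abs_of_neg hr, abs_of_pos (by linarith)]
  rw [mul_div_mul_right _ _ hdp.ne']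

theorem exists_line_end (hC : IsPCone (coneOver Ω) (lst (n := n))) (hop : IsOpen Ω)
    {x y : Euc n} (hx : x ∈ Ω) (hy : y ∈ Ω) (hxy : x ≠ y) :
    ∃ α ∈ frontier Ω, Collinear ℝ ({α, x, y} : Set (Euc n)) ∧ dist α x < dist α y := by
  have hx' := hat_mem.2 hx
  have hy' := hat_mem.2 hy
  obtain ⟨m, hm⟩ : ∃ m, m = gau (coneOver Ω) (hat y) (hat x) := ⟨_, rfl⟩
  obtain ⟨w, hw⟩ : ∃ w, w = m • hat x - hat y := ⟨_, rfl⟩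
  have hwcl : w ∈ closure (coneOver Ω) := by
    rw [hw, hm]; exact hC.gau_mem (subset_closure hy') hx'
  have hlw : lst w = m - 1 := by rw [hw]; simp [lst_hat]
  have hw0 : w ≠ 0 := by
    intro h0
    have h1 : m = 1 := by
      rw [h0, map_zero] at hlw
      linarith
    rw [h1, one_smul, h0] at hw
    exact hxy (hat_injective (sub_eq_zero.1 hw.symm))
  have hm1 : 0 < m - 1 := hlw ▸ hC.l_pos hwcl hw0
  have hwn : w ∉ coneOver Ω := by
    intro h
    rw [hw] at h
    have := (hC.toIsOCone.gau_lt_iff hx').2 ⟨(by linarith : 0 < m), h⟩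
    rw [← hm] at this
    exact lt_irrefl _ this
  have hα : x + (-(m - 1)⁻¹) • (y - x) = (lst w)⁻¹ • ini w := by
    rw [hlw, hw]
    simp only [map_sub, map_smul, ini_hat]
    match_scalars <;> field_simp
    ring
  refine ⟨x + (-(m - 1)⁻¹) • (y - x), ?_, ?_, ?_⟩
  · rw [hop.frontier_eq, hα]
    refine ⟨?_, fun h => hwn ⟨hlw ▸ hm1, h⟩⟩
    have hcw : ContinuousWithinAt (fun v : Euc (n + 1) => (lst v)⁻¹ • ini v) (coneOver Ω) w :=
      (continuousOn_proj.continuousAt ((isOpen_lt continuous_const lst.continuous).mem_nhds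
        (show 0 < lst w from hlw ▸ hm1))).continuousWithinAt
    exact hcw.mem_closure hwcl fun v hv => hv.2
  · rw [collinear_iff_of_mem (p₀ := x) (by simp)]
    refine ⟨y - x, ?_⟩
    simp only [mem_insert_iff, mem_singleton_iff, forall_eq_or_imp, forall_eq, vadd_eq_add]
    exact ⟨⟨_, add_comm _ _⟩, ⟨0, by simp⟩, ⟨1, by simp⟩⟩
  · have hdp : 0 < dist x y := dist_pos.2 hxy
    rw [dist_line_left, dist_line_right]
    have h1 : 0 < (m - 1)⁻¹ := inv_pos.2 hm1
    rw [abs_neg, abs_of_pos h1, sub_neg_eq_add, abs_of_pos (by linarith)]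
    gcongr
    linarith

/-- The Hilbert metric of the domain is the logarithm of the multiplicative metric of its cone. -/
theorem hilbertDist_eq (hC : IsPCone (coneOver Ω) (lst (n := n))) (hop : IsOpen Ω)
    (hcv : Convex ℝ Ω) {x y : Euc n} (hx : x ∈ Ω) (hy : y ∈ Ω) :
    hilbertDist Ω x y = Real.log (hilE (coneOver Ω) (hat x) (hat y)) := by
  unfold hilbertDist
  split_ifs with h
  · obtain ⟨h1, h2, h3, h4, h5, h6⟩ := h.choose_spec
    rw [ratio_eq_gau hC hop hcv hx hy h1 h3 h5,
      ratio_eq_gau hC hop hcv hy hx h2 (by rwa [Set.pair_comm y x]) h6, hilE, mul_comm]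
  · have hxy : x = y := by
      by_contra hxy
      obtain ⟨α, h1, h2, h3⟩ := exists_line_end hC hop hx hy hxy
      obtain ⟨β, k1, k2, k3⟩ := exists_line_end hC hop hy hx (Ne.symm hxy)
      exact h ⟨(α, β), h1, k1, h2, by rwa [Set.pair_comm y x] at k2, h3, k3⟩
    subst hxy
    rw [hilE, hC.gau_self (hat_mem.2 hx)]
    simp

/-- The homogeneous lift of a self-map of the domain to the cone over it. -/
def coneLift (τ : Euc n → Euc n) (v : Euc (n + 1)) : Euc (n + 1) :=
  lst v • hat (τ ((lst v)⁻¹ • ini v))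

theorem coneLift_hat (τ : Euc n → Euc n) (x : Euc n) : coneLift τ (hat x) = hat (τ x) := by
  simp [coneLift, lst_hat, ini_hat]

theorem coneLift_smul (τ : Euc n → Euc n) {c : ℝ} (hc : 0 < c) {v : Euc (n + 1)} (hv : 0 < lst v) :
    coneLift τ (c • v) = c • coneLift τ v := by
  unfold coneLift
  have h : (lst (c • v))⁻¹ • ini (c • v) = (lst v)⁻¹ • ini v := by
    rw [map_smul, map_smul, smul_smul, smul_eq_mul]
    congr 1
    field_simp
  rw [h, map_smul, smul_smul, smul_eq_mul]

theorem isIso_lift (hC : IsPCone (coneOver Ω) (lst (n := n))) (hop : IsOpen Ω)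
    (hcv : Convex ℝ Ω) {τ : Euc n → Euc n} (hτ : IsHilbertIsometry Ω Ω τ) :
    IsIso (coneOver Ω) (coneLift τ) where
  maps h := smul_mem_coneOver h.1 (hat_mem.2 (hτ.1 h.2))
  smul hc h := coneLift_smul τ hc h.1
  surj := by
    intro y hy
    obtain ⟨x, hx, hxy⟩ := hτ.2.1 hy.2
    refine ⟨lst y • hat x, smul_mem_coneOver hy.1 (hat_mem.2 hx), ?_⟩
    rw [coneLift_smul τ hy.1 (by rw [lst_hat]; exact one_pos), coneLift_hat, hxy, ← eq_smul_hat hy.1]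
  iso := by
    intro v w hv hw
    rw [eq_smul_hat hv.1, eq_smul_hat hw.1]
    set x := (lst v)⁻¹ • ini v with hx
    set y := (lst w)⁻¹ • ini w with hy
    have hxm : hat x ∈ coneOver Ω := hat_mem.2 hv.2
    have hym : hat y ∈ coneOver Ω := hat_mem.2 hw.2
    have hxm' : hat (τ x) ∈ coneOver Ω := hat_mem.2 (hτ.1 hv.2)
    have hym' : hat (τ y) ∈ coneOver Ω := hat_mem.2 (hτ.1 hw.2)
    rw [coneLift_smul τ hv.1 hxm.1, coneLift_smul τ hw.1 hym.1, coneLift_hat, coneLift_hat,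
      hC.hilE_smul_left hxm' (hC.smul hw.1 hym') hv.1, hC.hilE_smul_right hxm' hym' hw.1,
      hC.hilE_smul_left hxm (hC.smul hw.1 hym) hv.1, hC.hilE_smul_right hxm hym hw.1]
    have h := hτ.2.2 x hv.2 y hw.2
    rw [hilbertDist_eq hC hop hcv hv.2 hw.2,
      hilbertDist_eq hC hop hcv (hτ.1 hv.2) (hτ.1 hw.2)] at h
    exact Real.log_injOn_pos (lt_of_lt_of_le one_pos (hC.one_le_hilE hxm' hym'))
      (lt_of_lt_of_le one_pos (hC.one_le_hilE hxm hym)) h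

theorem isProjectiveOn_of_isProj {τ : Euc n → Euc n}
    (h : IsProj (coneOver Ω) (coneLift τ ∘ coneLift τ)) : IsProjectiveOn Ω (τ ∘ τ) := by
  obtain ⟨L, hL⟩ := h
  let w := WithLp.linearEquiv 2 ℝ (Fin (n + 1) → ℝ)
  refine ⟨(w.symm.trans L).trans w, fun x hx => ?_⟩
  obtain ⟨c, -, hc⟩ := hL _ (hat_mem.2 hx)
  rw [Function.comp_apply, coneLift_hat, coneLift_hat] at hc
  unfold projMap chart
  rw [Projectivization.map_mk, Projectivization.mk_eq_mk_iff']
  exact ⟨c, (congrArg w hc).symm⟩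

end Body

/-- If `τ : Ω → Ω` is an isometry of a Hilbert geometry onto itself,
then `τ² = τ ∘ τ` is (the restriction of) a projective transformation. -/
theorem stmt_9 {n : ℕ} (Ω : Set (Euc n))
    (hne : Ω.Nonempty) (hop : IsOpen Ω) (hbd : Bornology.IsBounded Ω) (hcv : Convex ℝ Ω)
    (τ : Euc n → Euc n) (hτ : IsHilbertIsometry Ω Ω τ) :
    IsProjectiveOn Ω (τ ∘ τ) := by
  rcases Nat.eq_zero_or_pos n with rfl | hn
  -- `ℝ⁰` is a single point, while `isProj_sq` needs a cone of dimension at least `2`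
  · refine ⟨LinearEquiv.refl ℝ _, fun x _ => ?_⟩
    rw [Subsingleton.elim ((τ ∘ τ) x) x, projMap]
    exact congrFun Projectivization.map_id.symm _
  · have hC := isPCone_coneOver hne hop hbd hcv
    refine isProjectiveOn_of_isProj (isProj_sq hC ?_ (isIso_lift hC hop hcv hτ))
    rw [finrank_euclideanSpace_fin]
    omega
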